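/- Let E(x) = S(x) − (π²/2)x. Then liminf_{x→∞} E(x)/x^{1/2} = −∞; that is, for every real C there exist arbitrarily large x with E(x) < −C·x^{1/2}. -/

import Mathlib

open Real

/-- `r₂(m)`: the number of representations of `m` as a sum of two squares of integers. -/
noncomputable def r2 (m : ℕ) : ℕ :=
  Set.ncard {p : ℤ × ℤ | p.1 ^ 2 + p.2 ^ 2 = (m : ℤ)}

/-- `S(x)`: the number of integer points `(a,b,w)` with `(a²+b²)² + w² < x`. -/
noncomputable def S (x : ℝ) : ℕ :=
  Set.ncard {p : ℤ × ℤ × ℤ |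
    (((p.1 : ℝ) ^ 2 + (p.2.1 : ℝ) ^ 2) ^ 2 + (p.2.2 : ℝ) ^ 2) < x}

/-- `E(x) = S(x) - (π²/2)·x`. -/
noncomputable def E (x : ℝ) : ℝ := (S x : ℝ) - (Real.pi ^ 2 / 2) * x

/-!
For `x = T⁴`, the half chord `√(T⁴ - q²)` of the solid `(a² + b²)² + w² < x` over a lattice point
with `q = a² + b²` equals `√2 T √(T² - q) - T² sqrtGap (q / T²)`. Since `sqrtGap` is convex and
decreasing, its sum over the lattice is at least the corresponding integral minus `O(1)`. Hence
`E (T⁴)` is at most `2√2 T` times the error term `∑ √(T² - q) - (2π/3) T³`, up to `O(T²)`, and it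
suffices that this error term is not bounded below by `-C T`.

By Poisson summation its Laplace transform is `∑_{v ≠ 0} 4π / (s² + 4π²|v|²)²`, with double poles
at `± 2πi|v|` whose coefficients are negative. Were the error term plus `C T` nonnegative,
its Laplace transform would be positive definite along vertical lines; approaching the imaginary
axis, so would be the function on `ℝ` with value `C` at `0` and value `-∑ 1 / (4π|v|²)`, over
`2π|v| = |ω|`, at `ω ≠ 0`. Testing positive definiteness on Følner sets of `ℝ` bounds
`∑_{v ∈ V} 1 / (4π|v|²)` by `C` for all finite `V`, whereas `∑ 1 / |v|²` diverges.
-/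

/-- The squared Euclidean norm `a² + b²` of the lattice point `(a, b)`, as a real number. -/
def sqNorm (v : ℤ × ℤ) : ℝ := (v.1 : ℝ) ^ 2 + (v.2 : ℝ) ^ 2

lemma sqNorm_nonneg (v : ℤ × ℤ) : 0 ≤ sqNorm v := add_nonneg (sq_nonneg _) (sq_nonneg _)

lemma one_le_sqNorm {v : ℤ × ℤ} (hv : v ≠ 0) : 1 ≤ sqNorm v := by
  have hint : (0 : ℤ) < v.1 ^ 2 + v.2 ^ 2 := by
    by_contra! hle
    have h1 : v.1 ^ 2 = 0 := by nlinarith [sq_nonneg v.1, sq_nonneg v.2]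
    have h2 : v.2 ^ 2 = 0 := by nlinarith [sq_nonneg v.1, sq_nonneg v.2]
    exact hv (Prod.ext (pow_eq_zero_iff two_ne_zero |>.1 h1) (pow_eq_zero_iff two_ne_zero |>.1 h2))
  unfold sqNorm
  exact_mod_cast hint

lemma sqNorm_pos {v : ℤ × ℤ} (hv : v ≠ 0) : 0 < sqNorm v := one_pos.trans_le (one_le_sqNorm hv)

section LatticeSums

open MeasureTheory Set
open scoped ENNReal

lemma lintegral_comp_sq_add_sq (f : ℝ → ℝ≥0∞) (hf : Measurable f) :
    ∫⁻ p : ℝ × ℝ, f (p.1 ^ 2 + p.2 ^ 2) = ENNReal.ofReal π * ∫⁻ u in Ioi 0, f u := by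
  have hsq : ∫⁻ u in Ioi 0, f u = ∫⁻ r in Ioi (0 : ℝ), ENNReal.ofReal (2 * r) * f (r ^ 2) := by
    have himage : (fun r : ℝ => r ^ 2) '' Ioi 0 = Ioi 0 := by
      ext u
      refine ⟨?_, fun hu => ⟨√u, Real.sqrt_pos.2 hu, Real.sq_sqrt (le_of_lt hu)⟩⟩
      rintro ⟨r, hr, rfl⟩
      exact pow_pos (mem_Ioi.1 hr) 2
    conv_lhs => rw [← himage]
    rw [lintegral_image_eq_lintegral_abs_deriv_mul (f' := fun r => 2 * r) measurableSet_Ioi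
      (fun r _ => by simpa using (hasDerivAt_pow 2 r).hasDerivWithinAt)
      ((pow_left_strictMonoOn₀ two_ne_zero).injOn.mono Ioi_subset_Ici_self)]
    refine setLIntegral_congr_fun measurableSet_Ioi fun r hr => ?_
    rw [abs_of_pos (mul_pos two_pos (mem_Ioi.1 hr))]
  have hpolar : ∀ p : ℝ × ℝ, (polarCoord.symm p).1 ^ 2 + (polarCoord.symm p).2 ^ 2 = p.1 ^ 2 := by
    intro p
    simp only [polarCoord_symm_apply]
    linear_combination p.1 ^ 2 * Real.sin_sq_add_cos_sq p.2
  rw [← lintegral_comp_polarCoord_symm, polarCoord_target, Measure.volume_eq_prod,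
    ← Measure.prod_restrict]
  simp only [hpolar, smul_eq_mul]
  rw [lintegral_prod _ (by fun_prop), hsq, ← lintegral_const_mul _ (by fun_prop)]
  refine lintegral_congr fun r => ?_
  dsimp only
  rw [setLIntegral_const, Real.volume_Ioo, sub_neg_eq_add, ← two_mul, ENNReal.ofReal_mul two_pos.le,
    ENNReal.ofReal_mul two_pos.le]
  ring

variable {φ : ℝ → ℝ}

/- The shift `1/4` is the largest gap between the parabola `s ↦ s²` and its chord over
`[n, n + 1]`. -/
lemma comp_add_sq_le_of_convexOn (hconv : ConvexOn ℝ (Ici 0) φ) (hanti : AntitoneOn φ (Ici 0))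
    {a : ℝ} (ha : 0 ≤ a) (n : ℝ) {θ : ℝ} (hθ : θ ∈ Icc (0 : ℝ) 1) :
    φ (a + (n + θ) ^ 2 + 1 / 4) ≤ (1 - θ) * φ (a + n ^ 2) + θ * φ (a + (n + 1) ^ 2) := by
  obtain ⟨h0, h1⟩ := hθ
  have hleft : a + n ^ 2 ∈ Ici (0 : ℝ) := mem_Ici.2 (by positivity)
  have hright : a + (n + 1) ^ 2 ∈ Ici (0 : ℝ) := mem_Ici.2 (by positivity)
  refine le_trans ?_ (hconv.2 hleft hright (sub_nonneg.2 h1) h0 (sub_add_cancel 1 θ))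
  refine hanti (hconv.1 hleft hright (sub_nonneg.2 h1) h0 (sub_add_cancel 1 θ))
    (mem_Ici.2 (by positivity)) ?_
  simp only [smul_eq_mul]
  nlinarith [sq_nonneg (2 * θ - 1)]

lemma lintegral_Ioc_comp_add_sq_le (hconv : ConvexOn ℝ (Ici 0) φ) (hanti : AntitoneOn φ (Ici 0))
    {a : ℝ} (ha : 0 ≤ a) (n : ℝ) :
    ∫⁻ s in Ioc n (n + 1), ENNReal.ofReal (φ (a + s ^ 2 + 1 / 4)) ≤
      ENNReal.ofReal (φ (a + n ^ 2)) / 2 + ENNReal.ofReal (φ (a + (n + 1) ^ 2)) / 2 := by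
  have hint (f : ℝ → ℝ) (hf : Continuous f) (hpos : ∀ s ∈ Ioc n (n + 1), 0 ≤ f s)
      (hval : ∫ s in n..n + 1, f s = 1 / 2) :
      ∫⁻ s in Ioc n (n + 1), ENNReal.ofReal (f s) = 2⁻¹ := by
    rw [← ofReal_integral_eq_lintegral_ofReal
      ((hf.intervalIntegrable n (n + 1)).1) (ae_restrict_of_forall_mem measurableSet_Ioc hpos),
      ← intervalIntegral.integral_of_le (by linarith), hval, one_div,
      ENNReal.ofReal_inv_of_pos two_pos, ENNReal.ofReal_ofNat]
  calc ∫⁻ s in Ioc n (n + 1), ENNReal.ofReal (φ (a + s ^ 2 + 1 / 4))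
      ≤ ∫⁻ s in Ioc n (n + 1), (ENNReal.ofReal (n + 1 - s) * ENNReal.ofReal (φ (a + n ^ 2)) +
          ENNReal.ofReal (s - n) * ENNReal.ofReal (φ (a + (n + 1) ^ 2))) := by
        refine setLIntegral_mono (by fun_prop) fun s hs => ?_
        have h := comp_add_sq_le_of_convexOn hconv hanti ha n (θ := s - n)
          ⟨by linarith [hs.1], by linarith [hs.2]⟩
        rw [add_sub_cancel, sub_sub_eq_add_sub, add_comm 1 n] at h
        rw [← ENNReal.ofReal_mul (by linarith [hs.2]), ← ENNReal.ofReal_mul (by linarith [hs.1])]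
        exact (ENNReal.ofReal_le_ofReal h).trans ENNReal.ofReal_add_le
    _ = ENNReal.ofReal (φ (a + n ^ 2)) / 2 + ENNReal.ofReal (φ (a + (n + 1) ^ 2)) / 2 := by
        rw [lintegral_add_left (by fun_prop), lintegral_mul_const _ (by fun_prop),
          lintegral_mul_const _ (by fun_prop),
          hint (fun s => n + 1 - s) (by fun_prop) (fun s hs => by linarith [hs.2])
            (by rw [intervalIntegral.integral_comp_sub_left fun s => s]; simp),
          hint (fun s => s - n) (by fun_prop) (fun s hs => by linarith [hs.1]) (by simp; ring)]
        simp only [ENNReal.div_eq_inv_mul]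

lemma lintegral_comp_add_sq_le_tsum (hconv : ConvexOn ℝ (Ici 0) φ) (hanti : AntitoneOn φ (Ici 0))
    {a : ℝ} (ha : 0 ≤ a) :
    ∫⁻ s, ENNReal.ofReal (φ (a + s ^ 2 + 1 / 4)) ≤
      ∑' n : ℤ, ENNReal.ofReal (φ (a + (n : ℝ) ^ 2)) := by
  have hshift : ∑' n : ℤ, ENNReal.ofReal (φ (a + ((n : ℝ) + 1) ^ 2)) =
      ∑' n : ℤ, ENNReal.ofReal (φ (a + (n : ℝ) ^ 2)) := by
    simpa using (Equiv.addRight (1 : ℤ)).tsum_eq fun n => ENNReal.ofReal (φ (a + (n : ℝ) ^ 2))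
  calc ∫⁻ s, ENNReal.ofReal (φ (a + s ^ 2 + 1 / 4))
      = ∑' n : ℤ, ∫⁻ s in Ioc (n : ℝ) (n + 1), ENNReal.ofReal (φ (a + s ^ 2 + 1 / 4)) := by
        rw [← lintegral_iUnion (fun _ => measurableSet_Ioc) (pairwise_disjoint_Ioc_intCast ℝ),
          iUnion_Ioc_intCast, Measure.restrict_univ]
    _ ≤ ∑' n : ℤ, (ENNReal.ofReal (φ (a + (n : ℝ) ^ 2)) / 2 +
          ENNReal.ofReal (φ (a + ((n : ℝ) + 1) ^ 2)) / 2) :=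
        ENNReal.tsum_le_tsum fun n => lintegral_Ioc_comp_add_sq_le hconv hanti ha n
    _ = ∑' n : ℤ, ENNReal.ofReal (φ (a + (n : ℝ) ^ 2)) := by
        simp_rw [ENNReal.tsum_add, div_eq_mul_inv, ENNReal.tsum_mul_right, hshift]
        rw [← mul_add, ENNReal.inv_two_add_inv_two, mul_one]

theorem lintegral_comp_sq_add_sq_le_tsum (hconv : ConvexOn ℝ (Ici 0) φ)
    (hanti : AntitoneOn φ (Ici 0)) (hmeas : Measurable φ) :
    ∫⁻ p : ℝ × ℝ, ENNReal.ofReal (φ (p.1 ^ 2 + p.2 ^ 2 + 1 / 2)) ≤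
      ∑' v : ℤ × ℤ, ENNReal.ofReal (φ (sqNorm v)) := by
  calc ∫⁻ p : ℝ × ℝ, ENNReal.ofReal (φ (p.1 ^ 2 + p.2 ^ 2 + 1 / 2))
      = ∫⁻ s : ℝ, ∫⁻ t : ℝ, ENNReal.ofReal (φ (s ^ 2 + 1 / 4 + t ^ 2 + 1 / 4)) := by
        rw [Measure.volume_eq_prod, lintegral_prod _ (by fun_prop)]
        ring_nf
    _ ≤ ∫⁻ s : ℝ, ∑' n : ℤ, ENNReal.ofReal (φ (s ^ 2 + 1 / 4 + (n : ℝ) ^ 2)) :=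
        lintegral_mono fun s => lintegral_comp_add_sq_le_tsum hconv hanti (by positivity)
    _ = ∑' n : ℤ, ∫⁻ s : ℝ, ENNReal.ofReal (φ ((n : ℝ) ^ 2 + s ^ 2 + 1 / 4)) := by
        rw [lintegral_tsum fun n => by fun_prop]
        exact tsum_congr fun n => lintegral_congr fun s =>
          congrArg (fun u => ENNReal.ofReal (φ u)) (by ring)
    _ ≤ ∑' n : ℤ, ∑' m : ℤ, ENNReal.ofReal (φ ((n : ℝ) ^ 2 + (m : ℝ) ^ 2)) :=
        ENNReal.tsum_le_tsum fun n => lintegral_comp_add_sq_le_tsum hconv hanti (sq_nonneg _)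
    _ = ∑' v : ℤ × ℤ, ENNReal.ofReal (φ (sqNorm v)) := ENNReal.tsum_prod.symm

theorem pi_mul_lintegral_le_tsum_sqNorm (hconv : ConvexOn ℝ (Ici 0) φ)
    (hanti : AntitoneOn φ (Ici 0)) (hmeas : Measurable φ) :
    ENNReal.ofReal π * ∫⁻ u in Ioi 0, ENNReal.ofReal (φ u) ≤
      ∑' v : ℤ × ℤ, ENNReal.ofReal (φ (sqNorm v)) + ENNReal.ofReal (π / 2 * φ 0) := by
  have htail : ENNReal.ofReal π * ∫⁻ u in Ioi (1 / 2), ENNReal.ofReal (φ u) ≤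
      ∑' v : ℤ × ℤ, ENNReal.ofReal (φ (sqNorm v)) := by
    refine le_trans (le_of_eq ?_) (lintegral_comp_sq_add_sq_le_tsum hconv hanti hmeas)
    rw [lintegral_comp_sq_add_sq (fun u => ENNReal.ofReal (φ (u + 1 / 2))) (by fun_prop)]
    have hshift := (measurePreserving_add_right volume (1 / 2 : ℝ)).setLIntegral_comp_preimage
      measurableSet_Ioi (f := fun u => ENNReal.ofReal (φ u)) (s := Ioi (1 / 2)) (by fun_prop)
    rw [preimage_add_const_Ioi, sub_self] at hshift
    rw [hshift]
  have hhead : ∫⁻ u in Ioc 0 (1 / 2), ENNReal.ofReal (φ u) ≤ ENNReal.ofReal (1 / 2 * φ 0) := by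
    calc ∫⁻ u in Ioc (0 : ℝ) (1 / 2), ENNReal.ofReal (φ u)
        ≤ ∫⁻ _ in Ioc (0 : ℝ) (1 / 2), ENNReal.ofReal (φ 0) :=
          setLIntegral_mono measurable_const fun u hu =>
            ENNReal.ofReal_le_ofReal (hanti self_mem_Ici hu.1.le hu.1.le)
      _ = ENNReal.ofReal (1 / 2 * φ 0) := by
          rw [setLIntegral_const, Real.volume_Ioc, sub_zero, mul_comm,
            ENNReal.ofReal_mul (by norm_num)]
  rw [← Ioc_union_Ioi_eq_Ioi (show (0 : ℝ) ≤ 1 / 2 by norm_num),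
    lintegral_union measurableSet_Ioi (Ioc_disjoint_Ioi le_rfl), mul_add, add_comm]
  refine add_le_add htail ((mul_le_mul_right hhead _).trans (le_of_eq ?_))
  rw [← ENNReal.ofReal_mul pi_pos.le]
  ring_nf

theorem not_summable_inv_sqNorm : ¬ Summable fun v : ℤ × ℤ => (sqNorm v)⁻¹ := by
  intro hsum
  have hconv : ConvexOn ℝ (Ici 0) fun u : ℝ => (1 + u)⁻¹ := by
    refine (((convexOn_zpow (-1)).translate_right 1).subset (fun u hu => ?_)
      (convex_Ici 0)).congr fun u _ => by simp
    exact add_pos_of_pos_of_nonneg one_pos (mem_Ici.1 hu)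
  have hanti : AntitoneOn (fun u : ℝ => (1 + u)⁻¹) (Ici 0) := fun u hu v _ huv =>
    inv_anti₀ (by linarith [mem_Ici.1 hu]) (add_le_add_right huv 1)
  have hpos (v : ℤ × ℤ) : 0 ≤ (1 + sqNorm v)⁻¹ := inv_nonneg.2 (by linarith [sqNorm_nonneg v])
  have hsum' : Summable fun v : ℤ × ℤ => (1 + sqNorm v)⁻¹ := by
    refine .of_norm_bounded_eventually hsum ?_
    filter_upwards [Filter.eventually_cofinite_ne (0 : ℤ × ℤ)] with v hv
    rw [Real.norm_of_nonneg (hpos v)]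
    exact inv_anti₀ (sqNorm_pos hv) (by linarith)
  have hfin := pi_mul_lintegral_le_tsum_sqNorm hconv hanti (by fun_prop)
  rw [← ENNReal.ofReal_tsum_of_nonneg hpos hsum', ← ENNReal.ofReal_add (tsum_nonneg hpos)
    (by positivity)] at hfin
  have hint : IntegrableOn (fun u : ℝ => (1 + u)⁻¹) (Ioi 0) := by
    refine ⟨by fun_prop, (hasFiniteIntegral_iff_ofReal ?_).2 ?_⟩
    · exact ae_restrict_of_forall_mem measurableSet_Ioi fun u hu =>
        inv_nonneg.2 (by linarith [mem_Ioi.1 hu])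
    · exact ENNReal.lt_top_of_mul_ne_top_right (ne_top_of_le_ne_top ENNReal.ofReal_ne_top hfin)
        (ENNReal.ofReal_pos.2 pi_pos).ne'
  refine not_integrableOn_Ioi_inv (a := 1)
    (((hint.mono_set (Ioi_subset_Ioi zero_le_one)).const_mul 2).mono' (by fun_prop) ?_)
  filter_upwards [ae_restrict_mem measurableSet_Ioi] with u hu
  have hu' : 1 < u := hu
  rw [Real.norm_of_nonneg (by positivity), inv_le_iff_one_le_mul₀ (by positivity)]
  field_simp
  linarith

end LatticeSums

section SqrtGap

open MeasureTheory Set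

/-- The gap `√2 √(1 - u) - √(1 - u²)` between a half chord of the solid `r⁴ + w² < 1`, at squared
distance `u = r²` from the axis, and `√2` times the half chord of the unit ball at the same
distance. Since `√` vanishes at negative arguments, it is zero for `u ≥ 1`. -/
noncomputable def sqrtGap (u : ℝ) : ℝ := √2 * √(1 - u) - √(1 - u ^ 2)

lemma continuous_sqrtGap : Continuous sqrtGap := by
  unfold sqrtGap
  fun_prop

lemma sqrtGap_of_one_le {u : ℝ} (hu : 1 ≤ u) : sqrtGap u = 0 := by
  rw [sqrtGap, Real.sqrt_eq_zero_of_nonpos (sub_nonpos.2 hu),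
    Real.sqrt_eq_zero_of_nonpos (sub_nonpos.2 (one_le_pow₀ hu)), mul_zero, sub_zero]

/- In the variable `w = 1 - u` the gap is a product of two increasing convex functions. -/
lemma sqrtGap_eq_rpow_mul_inv {u : ℝ} (hu : 0 ≤ u) :
    sqrtGap u = max (1 - u) 0 ^ (3 / 2 : ℝ) * (√2 + √(2 - max (1 - u) 0))⁻¹ := by
  obtain h | h := le_total 1 u
  · rw [sqrtGap_of_one_le h, max_eq_right (by linarith), Real.zero_rpow (by norm_num), zero_mul]
  · have hw : 0 ≤ 1 - u := by linarith
    have hfactor : √(1 - u ^ 2) = √(1 - u) * √(2 - (1 - u)) := by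
      rw [← Real.sqrt_mul hw]
      ring_nf
    have hpow : (1 - u) ^ (3 / 2 : ℝ) = (1 - u) * √(1 - u) := by
      rw [show (3 / 2 : ℝ) = 1 + 1 / 2 by norm_num, Real.rpow_add_of_nonneg hw (by norm_num)
        (by norm_num), Real.rpow_one, Real.sqrt_eq_rpow]
    have hpos : 0 < √2 + √(2 - (1 - u)) := by positivity
    rw [sqrtGap, max_eq_left hw, hfactor, hpow, ← div_eq_mul_inv, eq_div_iff hpos.ne']
    linear_combination √(1 - u) * (Real.sq_sqrt (zero_le_two (α := ℝ)) -
      Real.sq_sqrt (show 0 ≤ 2 - (1 - u) by linarith))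

lemma sqrtGap_nonneg {u : ℝ} (hu : 0 ≤ u) : 0 ≤ sqrtGap u := by
  rw [sqrtGap_eq_rpow_mul_inv hu]
  positivity

lemma monotone_inv_sqrt_two_add_sqrt_sub : Monotone fun w : ℝ => (√2 + √(2 - w))⁻¹ :=
  fun _ _ h => inv_anti₀ (by positivity) (by gcongr)

lemma convexOn_inv_sqrt_two_add_sqrt_sub :
    ConvexOn ℝ (Icc 0 1) fun w : ℝ => (√2 + √(2 - w))⁻¹ := by
  have hconcave : ConcaveOn ℝ (Icc 0 1) fun w : ℝ => √2 + √(2 - w) := by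
    refine ((concaveOn_const √2 (convex_Icc 0 1)).add
      ((strictConcaveOn_sqrt.concaveOn.comp_affineMap
        (AffineMap.const ℝ ℝ (2 : ℝ) - AffineMap.id ℝ ℝ)).subset (fun w hw => ?_)
        (convex_Icc 0 1)))
    exact sub_nonneg.2 (hw.2.trans one_le_two)
  have himage : (fun w : ℝ => √2 + √(2 - w)) '' Icc 0 1 ⊆ Ioi 0 := by
    rintro _ ⟨w, -, rfl⟩
    exact add_pos_of_pos_of_nonneg (by positivity) (Real.sqrt_nonneg _)
  have hconvex : Convex ℝ ((fun w : ℝ => √2 + √(2 - w)) '' Icc 0 1) :=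
    (isPreconnected_Icc.image _ (by fun_prop)).ordConnected.convex
  simpa [Function.comp_def] using ((convexOn_zpow (-1)).subset himage hconvex).comp_concaveOn
    hconcave fun a ha b _ hab => by simpa using inv_anti₀ (himage ha) hab

lemma monotoneOn_rpow_mul_inv :
    MonotoneOn (fun w : ℝ => w ^ (3 / 2 : ℝ) * (√2 + √(2 - w))⁻¹) (Icc 0 1) :=
  fun a ha _ _ hab => mul_le_mul (Real.rpow_le_rpow ha.1 hab (by norm_num))
    (monotone_inv_sqrt_two_add_sqrt_sub hab) (by positivity) (Real.rpow_nonneg (ha.1.trans hab) _)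

lemma convexOn_rpow_mul_inv :
    ConvexOn ℝ (Icc 0 1) fun w : ℝ => w ^ (3 / 2 : ℝ) * (√2 + √(2 - w))⁻¹ :=
  ((convexOn_rpow (by norm_num)).subset Icc_subset_Ici_self (convex_Icc 0 1)).mul
    convexOn_inv_sqrt_two_add_sqrt_sub (fun _ hw => Real.rpow_nonneg hw.1 _)
    (fun _ _ => by positivity)
    (MonotoneOn.monovaryOn (fun _ ha _ _ hab => Real.rpow_le_rpow ha.1 hab (by norm_num))
      (monotone_inv_sqrt_two_add_sqrt_sub.monotoneOn _))

lemma image_max_one_sub_zero : (fun u : ℝ => max (1 - u) 0) '' Ici 0 = Icc 0 1 := by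
  ext w
  refine ⟨?_, fun hw => ⟨1 - w, sub_nonneg.2 hw.2, by simp [hw.1]⟩⟩
  rintro ⟨u, hu, rfl⟩
  exact ⟨le_max_right _ _, max_le (sub_le_self 1 hu) zero_le_one⟩

lemma convexOn_sqrtGap : ConvexOn ℝ (Ici 0) sqrtGap := by
  have hmax : ConvexOn ℝ (Ici 0) fun u : ℝ => max (1 - u) 0 :=
    ((convexOn_const 1 (convex_Ici 0)).sub (concaveOn_id (convex_Ici 0))).sup
      (convexOn_const 0 (convex_Ici 0))
  have hconv := convexOn_rpow_mul_inv
  have hmono := monotoneOn_rpow_mul_inv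
  rw [← image_max_one_sub_zero] at hconv hmono
  exact (hconv.comp hmax hmono).congr fun u hu => (sqrtGap_eq_rpow_mul_inv hu).symm

lemma antitoneOn_sqrtGap : AntitoneOn sqrtGap (Ici 0) := by
  intro a ha b hb hab
  rw [sqrtGap_eq_rpow_mul_inv ha, sqrtGap_eq_rpow_mul_inv hb]
  exact monotoneOn_rpow_mul_inv (image_max_one_sub_zero ▸ mem_image_of_mem _ hb)
    (image_max_one_sub_zero ▸ mem_image_of_mem _ ha) (by gcongr)

lemma integral_sqrtGap : ∫ t in (0 : ℝ)..1, sqrtGap t = 2 * √2 / 3 - π / 4 := by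
  have hlinear : ∫ t in (0 : ℝ)..1, √(1 - t) = 2 / 3 := by
    rw [intervalIntegral.integral_comp_sub_left (fun t => √t) 1]
    simp only [Real.sqrt_eq_rpow]
    rw [integral_rpow (by norm_num)]
    norm_num
  have hcircle : ∫ t in (0 : ℝ)..1, √(1 - t ^ 2) = π / 4 := by
    have h := integral_sqrt_one_sub_sq
    rw [← intervalIntegral.integral_add_adjacent_intervals (b := 0)
      (Continuous.intervalIntegrable (by fun_prop) _ _)
      (Continuous.intervalIntegrable (by fun_prop) _ _)] at h
    have hsymm := intervalIntegral.integral_comp_neg (fun t => √(1 - t ^ 2)) (a := (0 : ℝ)) (b := 1)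
    simp only [neg_sq, neg_zero] at hsymm
    linarith
  unfold sqrtGap
  rw [intervalIntegral.integral_sub (Continuous.intervalIntegrable (by fun_prop) _ _)
    (Continuous.intervalIntegrable (by fun_prop) _ _), intervalIntegral.integral_const_mul,
    hlinear, hcircle]
  ring

lemma lintegral_sqrtGap_div {y : ℝ} (hy : 0 < y) :
    ∫⁻ u in Ioi 0, ENNReal.ofReal (sqrtGap (u / y)) =
      ENNReal.ofReal (y * (2 * √2 / 3 - π / 4)) := by
  have hval : ∫ u in Ioc 0 y, sqrtGap (u / y) = y * (2 * √2 / 3 - π / 4) := by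
    rw [← intervalIntegral.integral_of_le hy.le, intervalIntegral.integral_comp_div _ hy.ne',
      zero_div, div_self hy.ne', integral_sqrtGap, smul_eq_mul]
  have hzero : ∫⁻ u in Ioi y, ENNReal.ofReal (sqrtGap (u / y)) = 0 := by
    refine setLIntegral_eq_zero measurableSet_Ioi fun u hu => ?_
    rw [sqrtGap_of_one_le ((one_le_div hy).2 (le_of_lt hu)), ENNReal.ofReal_zero, Pi.zero_apply]
  rw [← Ioc_union_Ioi_eq_Ioi hy.le, lintegral_union measurableSet_Ioi (Ioc_disjoint_Ioi le_rfl),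
    hzero, add_zero, ← hval, ofReal_integral_eq_lintegral_ofReal]
  · exact ((continuous_sqrtGap.comp (continuous_id.div_const y)).intervalIntegrable 0 y).1
  · exact ae_restrict_of_forall_mem measurableSet_Ioc fun u hu =>
      sqrtGap_nonneg (div_nonneg hu.1.le hy.le)

theorem le_sum_sqrtGap_sqNorm_div {y : ℝ} (hy : 0 < y) {V : Finset (ℤ × ℤ)}
    (hV : ∀ v ∉ V, y ≤ sqNorm v) :
    π * y * (2 * √2 / 3 - π / 4) - π / 2 * sqrtGap 0 ≤ ∑ v ∈ V, sqrtGap (sqNorm v / y) := by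
  have hdiv : MapsTo (fun u : ℝ => u / y) (Ici 0) (Ici 0) := fun u hu => div_nonneg hu hy.le
  have hconv : ConvexOn ℝ (Ici 0) fun u => sqrtGap (u / y) := by
    refine ((convexOn_sqrtGap.comp_linearMap (y⁻¹ • LinearMap.id)).subset (fun u hu => ?_)
      (convex_Ici 0)).congr fun u _ => by simp [div_eq_inv_mul]
    simpa [div_eq_inv_mul] using hdiv hu
  have hanti : AntitoneOn (fun u => sqrtGap (u / y)) (Ici 0) := fun a ha b hb hab =>
    antitoneOn_sqrtGap (hdiv ha) (hdiv hb) (div_le_div_of_nonneg_right hab hy.le)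
  have hnonneg (v : ℤ × ℤ) : 0 ≤ sqrtGap (sqNorm v / y) := sqrtGap_nonneg (hdiv (sqNorm_nonneg v))
  have h := pi_mul_lintegral_le_tsum_sqNorm hconv hanti
    (continuous_sqrtGap.measurable.comp (measurable_id.div_const y))
  rw [lintegral_sqrtGap_div hy, ← ENNReal.ofReal_mul pi_pos.le, zero_div,
    tsum_eq_sum (s := V) fun v hv => by
      rw [sqrtGap_of_one_le ((one_le_div hy).2 (hV v hv)), ENNReal.ofReal_zero],
    ← ENNReal.ofReal_sum_of_nonneg fun v _ => hnonneg v,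
    ← ENNReal.ofReal_add (Finset.sum_nonneg fun v _ => hnonneg v)
      (mul_nonneg (by positivity) (sqrtGap_nonneg le_rfl)),
    ENNReal.ofReal_le_ofReal_iff (add_nonneg (Finset.sum_nonneg fun v _ => hnonneg v)
      (mul_nonneg (by positivity) (sqrtGap_nonneg le_rfl)))] at h
  linarith

end SqrtGap

section LatticeDisc

open Set

lemma abs_le_floor_of_sq_lt {n : ℤ} {T : ℝ} (hT : 0 ≤ T) (h : (n : ℝ) ^ 2 < T ^ 2) :
    |n| ≤ ⌊T⌋ := by
  rw [Int.le_floor, Int.cast_abs]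
  exact (abs_lt_of_sq_lt_sq h hT).le

lemma mem_box_of_sqNorm_lt_sq {v : ℤ × ℤ} {T : ℝ} (hT : 0 ≤ T) (hv : sqNorm v < T ^ 2) :
    v ∈ Finset.Icc (-⌊T⌋) ⌊T⌋ ×ˢ Finset.Icc (-⌊T⌋) ⌊T⌋ := by
  unfold sqNorm at hv
  rw [Finset.mem_product, Finset.mem_Icc, Finset.mem_Icc, ← abs_le, ← abs_le]
  exact ⟨abs_le_floor_of_sq_lt hT (by nlinarith [sq_nonneg (v.2 : ℝ)]),
    abs_le_floor_of_sq_lt hT (by nlinarith [sq_nonneg (v.1 : ℝ)])⟩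

lemma finite_setOf_sqNorm_lt (y : ℝ) : {v | sqNorm v < y}.Finite := by
  refine (Finset.finite_toSet (Finset.Icc (-⌊√y⌋) ⌊√y⌋ ×ˢ Finset.Icc (-⌊√y⌋) ⌊√y⌋)).subset
    fun v hv => mem_box_of_sqNorm_lt_sq (Real.sqrt_nonneg y) ?_
  rw [Real.sq_sqrt ((sqNorm_nonneg v).trans (le_of_lt hv))]
  exact hv

/-- The lattice points in the open disc of squared radius `y` centred at the origin. -/
noncomputable def latticeDisc (y : ℝ) : Finset (ℤ × ℤ) := (finite_setOf_sqNorm_lt y).toFinset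

lemma mem_latticeDisc {y : ℝ} {v : ℤ × ℤ} : v ∈ latticeDisc y ↔ sqNorm v < y := by
  simp [latticeDisc]

lemma card_latticeDisc_sq_le {T : ℝ} (hT : 1 ≤ T) :
    ((latticeDisc (T ^ 2)).card : ℝ) ≤ 9 * T ^ 2 := by
  have hT0 : 0 ≤ T := zero_le_one.trans hT
  have hfloor : 0 ≤ ⌊T⌋ := Int.floor_nonneg.2 hT0
  have hcard := Finset.card_le_card fun v hv => mem_box_of_sqNorm_lt_sq hT0 (mem_latticeDisc.1 hv)
  have hside : ((Finset.Icc (-⌊T⌋) ⌊T⌋).card : ℝ) ≤ 3 * T := by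
    rw [Int.card_Icc, ← Int.cast_natCast, Int.toNat_of_nonneg (by omega)]
    push_cast
    linarith [Int.floor_le T]
  calc ((latticeDisc (T ^ 2)).card : ℝ)
      ≤ (Finset.Icc (-⌊T⌋) ⌊T⌋).card * (Finset.Icc (-⌊T⌋) ⌊T⌋).card := by
        rw [Finset.card_product] at hcard
        exact_mod_cast hcard
    _ ≤ 3 * T * (3 * T) := by gcongr
    _ = 9 * T ^ 2 := by ring

end LatticeDisc

section ErrorTerm

open Set

lemma S_le_sum_latticeDisc (x : ℝ) :
    (S x : ℝ) ≤ ∑ v ∈ latticeDisc √x, (2 * √(x - sqNorm v ^ 2) + 1) := by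
  classical
  let r (v : ℤ × ℤ) : ℕ := ⌊√(x - sqNorm v ^ 2)⌋₊
  let W : Finset (ℤ × ℤ × ℤ) := (latticeDisc √x).biUnion fun v =>
    (Finset.Icc (-(r v : ℤ)) (r v)).image fun w => (v.1, v.2, w)
  have hsub : {p : ℤ × ℤ × ℤ |
      (((p.1 : ℝ) ^ 2 + (p.2.1 : ℝ) ^ 2) ^ 2 + (p.2.2 : ℝ) ^ 2) < x} ⊆ (W : Set (ℤ × ℤ × ℤ)) := by
    rintro ⟨a, b, w⟩ hp
    have hp' : sqNorm (a, b) ^ 2 + (w : ℝ) ^ 2 < x := hp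
    simp only [W, Finset.coe_biUnion, mem_iUnion, Finset.coe_image, mem_image, Finset.mem_coe,
      Finset.mem_Icc]
    refine ⟨(a, b), mem_latticeDisc.2 ?_, w, ?_, rfl⟩
    · rw [Real.lt_sqrt (sqNorm_nonneg _)]
      linarith [sq_nonneg (w : ℝ)]
    · have hw : w.natAbs ≤ r (a, b) := by
        refine Nat.le_floor ?_
        rw [Nat.cast_natAbs, Int.cast_abs]
        exact Real.abs_le_sqrt (by linarith)
      omega
  have hfibre (v : ℤ × ℤ) : (Finset.Icc (-(r v : ℤ)) (r v)).card = 2 * r v + 1 := by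
    rw [Int.card_Icc]
    omega
  have hcard : S x ≤ ∑ v ∈ latticeDisc √x, (2 * r v + 1) := by
    refine (Set.ncard_le_ncard hsub W.finite_toSet).trans ?_
    rw [Set.ncard_coe_finset]
    exact Finset.card_biUnion_le.trans (Finset.sum_le_sum fun v _ =>
      Finset.card_image_le.trans (hfibre v).le)
  calc (S x : ℝ) ≤ ((∑ v ∈ latticeDisc √x, (2 * r v + 1) : ℕ) : ℝ) := by exact_mod_cast hcard
    _ = ∑ v ∈ latticeDisc √x, (2 * (r v : ℝ) + 1) := by push_cast; rfl
    _ ≤ ∑ v ∈ latticeDisc √x, (2 * √(x - sqNorm v ^ 2) + 1) := by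
        gcongr
        exact Nat.floor_le (Real.sqrt_nonneg _)

/-- Half the total length of the chords that the vertical lines through the integer points of the
plane cut out of the ball of radius `T` in `ℝ³`. Lines missing the ball contribute zero, since `√`
vanishes at negative arguments. -/
noncomputable def halfChordSum (T : ℝ) : ℝ := ∑' v : ℤ × ℤ, √(T ^ 2 - sqNorm v)

lemma halfChordSum_eq_sum (T : ℝ) :
    halfChordSum T = ∑ v ∈ latticeDisc (T ^ 2), √(T ^ 2 - sqNorm v) :=
  tsum_eq_sum fun _ hv =>
    Real.sqrt_eq_zero_of_nonpos (sub_nonpos.2 (not_lt.1 (mem_latticeDisc.not.1 hv)))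

lemma halfChordSum_nonneg (T : ℝ) : 0 ≤ halfChordSum T := tsum_nonneg fun _ => Real.sqrt_nonneg _

lemma sqrt_pow_four_sub_sq {T : ℝ} (hT : 0 < T) (u : ℝ) :
    √(T ^ 4 - u ^ 2) = √2 * T * √(T ^ 2 - u) - T ^ 2 * sqrtGap (u / T ^ 2) := by
  have hsolid : √(T ^ 4 - u ^ 2) = T ^ 2 * √(1 - (u / T ^ 2) ^ 2) := by
    rw [show T ^ 4 - u ^ 2 = (T ^ 2) ^ 2 * (1 - (u / T ^ 2) ^ 2) by field_simp,
      Real.sqrt_mul (by positivity), Real.sqrt_sq (by positivity)]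
  have hball : √(T ^ 2 - u) = T * √(1 - u / T ^ 2) := by
    rw [show T ^ 2 - u = T ^ 2 * (1 - u / T ^ 2) by field_simp,
      Real.sqrt_mul (by positivity), Real.sqrt_sq hT.le]
  rw [hsolid, hball, sqrtGap]
  ring

theorem E_pow_four_le {T : ℝ} (hT : 1 ≤ T) :
    E (T ^ 4) ≤ 2 * √2 * T * (halfChordSum T - 2 * π / 3 * T ^ 3) +
      (π * sqrtGap 0 + 9) * T ^ 2 := by
  have hT0 : 0 < T := one_pos.trans_le hT
  have hS := S_le_sum_latticeDisc (T ^ 4)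
  rw [show √(T ^ 4) = T ^ 2 by rw [show T ^ 4 = (T ^ 2) ^ 2 by ring, Real.sqrt_sq (by positivity)]]
    at hS
  have hgap := le_sum_sqrtGap_sqNorm_div (pow_pos hT0 2) (V := latticeDisc (T ^ 2))
    fun v hv => not_lt.1 (mem_latticeDisc.not.1 hv)
  have hsum : ∑ v ∈ latticeDisc (T ^ 2), (2 * √(T ^ 4 - sqNorm v ^ 2) + 1) =
      2 * √2 * T * halfChordSum T -
        2 * T ^ 2 * ∑ v ∈ latticeDisc (T ^ 2), sqrtGap (sqNorm v / T ^ 2) +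
        (latticeDisc (T ^ 2)).card := by
    rw [halfChordSum_eq_sum, Finset.mul_sum, Finset.mul_sum, ← Finset.sum_sub_distrib,
      Finset.sum_add_distrib, Finset.sum_const, nsmul_one]
    congr 1
    refine Finset.sum_congr rfl fun v _ => ?_
    rw [sqrt_pow_four_sub_sq hT0]
    ring
  rw [hsum] at hS
  have hgap' := mul_le_mul_of_nonneg_left hgap (show 0 ≤ 2 * T ^ 2 by positivity)
  unfold E
  linarith [card_latticeDisc_sq_le hT]

end ErrorTerm

section Theta

lemma summable_exp_neg_pi_mul_sq {a : ℝ} (ha : 0 < a) :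
    Summable fun n : ℤ => rexp (-π * a * (n : ℝ) ^ 2) := by
  refine ((summable_jacobiTheta₂_term_iff 0 (a * Complex.I)).2 (by simpa)).norm.congr fun n => ?_
  rw [norm_jacobiTheta₂_term]
  simp [mul_right_comm]

lemma tsum_ofReal_exp_neg_pi_mul_sq {a : ℝ} (ha : 0 < a) :
    ∑' n : ℤ, ENNReal.ofReal (rexp (-π * a * (n : ℝ) ^ 2)) =
      ENNReal.ofReal √a⁻¹ * ∑' n : ℤ, ENNReal.ofReal (rexp (-π * a⁻¹ * (n : ℝ) ^ 2)) := by
  rw [← ENNReal.ofReal_tsum_of_nonneg (fun _ => (exp_pos _).le) (summable_exp_neg_pi_mul_sq ha),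
    ← ENNReal.ofReal_tsum_of_nonneg (fun _ => (exp_pos _).le)
      (summable_exp_neg_pi_mul_sq (inv_pos.2 ha)),
    ← ENNReal.ofReal_mul (Real.sqrt_nonneg _), Real.tsum_exp_neg_mul_int_sq ha,
    ← Real.sqrt_eq_rpow, Real.sqrt_inv, one_div]
  rfl

lemma tsum_ofReal_exp_mul_sqNorm (c : ℝ) :
    ∑' v : ℤ × ℤ, ENNReal.ofReal (rexp (c * sqNorm v)) =
      (∑' n : ℤ, ENNReal.ofReal (rexp (c * (n : ℝ) ^ 2))) ^ 2 := by
  simp_rw [sqNorm, mul_add, Real.exp_add, ENNReal.ofReal_mul (Real.exp_pos _).le]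
  rw [ENNReal.tsum_prod (f := fun a b : ℤ => ENNReal.ofReal (rexp (c * (a : ℝ) ^ 2)) *
    ENNReal.ofReal (rexp (c * (b : ℝ) ^ 2)))]
  simp_rw [ENNReal.tsum_mul_left, ENNReal.tsum_mul_right, sq]

theorem tsum_ofReal_exp_neg_pi_mul_sqNorm {a : ℝ} (ha : 0 < a) :
    ∑' v : ℤ × ℤ, ENNReal.ofReal (rexp (-π * a * sqNorm v)) =
      ENNReal.ofReal a⁻¹ * ∑' v : ℤ × ℤ, ENNReal.ofReal (rexp (-π * a⁻¹ * sqNorm v)) := by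
  rw [tsum_ofReal_exp_mul_sqNorm, tsum_ofReal_exp_mul_sqNorm, tsum_ofReal_exp_neg_pi_mul_sq ha,
    mul_pow, ← ENNReal.ofReal_pow (Real.sqrt_nonneg _), Real.sq_sqrt (inv_nonneg.2 ha.le)]

end Theta

section Subordination

open MeasureTheory Set

variable {s c : ℝ}

lemma ofReal_exp_neg_eq_lintegral (hs : 0 < s) (hc : 0 ≤ c) :
    ENNReal.ofReal (rexp (-c)) =
      ∫⁻ T in Ioi 0, if c < s * T then ENNReal.ofReal (s * rexp (-(s * T))) else 0 := by
  have hval : ∫ T in Ioi (c / s), s * rexp (-(s * T)) = rexp (-c) := by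
    simp_rw [integral_const_mul, ← neg_mul, integral_exp_mul_Ioi (neg_neg_of_pos hs)]
    field_simp
  have hint : IntegrableOn (fun T => s * rexp (-(s * T))) (Ioi (c / s)) := by
    simp_rw [← neg_mul s]
    exact (integrableOn_exp_mul_Ioi (neg_neg_of_pos hs) _).const_mul s
  rw [← hval, ofReal_integral_eq_lintegral_ofReal hint (ae_of_all _ fun T => by positivity),
    ← lintegral_indicator measurableSet_Ioi, ← lintegral_indicator measurableSet_Ioi]
  refine lintegral_congr fun T => ?_
  have hiff : c / s < T ↔ c < s * T := by rw [div_lt_iff₀ hs, mul_comm]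
  by_cases h : c < s * T
  · have hT : 0 < T := (div_nonneg hc hs.le).trans_lt (hiff.2 h)
    simp [indicator, hiff, h, hT]
  · simp [indicator, hiff, h]

lemma pos_and_mul_sq_add_div_lt_iff (hs : 0 < s) (hc : 0 ≤ c) {T : ℝ} (hT : 0 < T) {l : ℝ} :
    0 < l ∧ l * s ^ 2 + c / (4 * l) < s * T ↔
      l ∈ Ioo ((T - √(T ^ 2 - c)) / (2 * s)) ((T + √(T ^ 2 - c)) / (2 * s)) := by
  have habs : l ∈ Ioo ((T - √(T ^ 2 - c)) / (2 * s)) ((T + √(T ^ 2 - c)) / (2 * s)) ↔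
      |2 * s * l - T| < √(T ^ 2 - c) := by
    rw [abs_lt, mem_Ioo, div_lt_iff₀ (by positivity), lt_div_iff₀ (by positivity)]
    constructor <;> rintro ⟨h1, h2⟩ <;> constructor <;> linarith
  have hclear (hl : 0 < l) : l * s ^ 2 + c / (4 * l) < s * T ↔ (2 * s * l - T) ^ 2 < T ^ 2 - c := by
    rw [show l * s ^ 2 + c / (4 * l) = (4 * l ^ 2 * s ^ 2 + c) / (4 * l) by field_simp,
      div_lt_iff₀ (by positivity)]
    constructor <;> intro h <;> nlinarith
  rw [habs, Real.lt_sqrt (abs_nonneg _), sq_abs]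
  refine ⟨fun ⟨hl, h⟩ => (hclear hl).1 h, fun h => ?_⟩
  have hl : 0 < l := by
    by_contra! hl
    nlinarith [mul_nonpos_of_nonneg_of_nonpos hs.le hl]
  exact ⟨hl, (hclear hl).2 h⟩

lemma lintegral_ite_mul_sq_add_div_lt (hs : 0 < s) (hc : 0 ≤ c) {T : ℝ} (hT : 0 < T) :
    ∫⁻ l in Ioi 0, (if l * s ^ 2 + c / (4 * l) < s * T
        then ENNReal.ofReal (s * rexp (-(s * T))) else 0) =
      ENNReal.ofReal (rexp (-(s * T)) * √(T ^ 2 - c)) := by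
  have hind : ((Ioi 0).indicator fun l => if l * s ^ 2 + c / (4 * l) < s * T
        then ENNReal.ofReal (s * rexp (-(s * T))) else 0) =
      (Ioo ((T - √(T ^ 2 - c)) / (2 * s)) ((T + √(T ^ 2 - c)) / (2 * s))).indicator
        fun _ => ENNReal.ofReal (s * rexp (-(s * T))) := by
    ext l
    have hiff := pos_and_mul_sq_add_div_lt_iff hs hc hT (l := l)
    simp only [indicator, mem_Ioi]
    split_ifs <;> tauto
  rw [← lintegral_indicator measurableSet_Ioi, hind, lintegral_indicator measurableSet_Ioo,
    setLIntegral_const, Real.volume_Ioo, ← ENNReal.ofReal_mul (by positivity)]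
  congr 1
  field_simp
  ring

theorem lintegral_exp_neg_mul_sqrt_sq_sub (hs : 0 < s) (hc : 0 ≤ c) :
    ∫⁻ T in Ioi 0, ENNReal.ofReal (rexp (-(s * T)) * √(T ^ 2 - c)) =
      ∫⁻ l in Ioi 0, ENNReal.ofReal (rexp (-(l * s ^ 2 + c / (4 * l)))) := by
  symm
  calc ∫⁻ l in Ioi 0, ENNReal.ofReal (rexp (-(l * s ^ 2 + c / (4 * l))))
      = ∫⁻ l in Ioi 0, ∫⁻ T in Ioi 0, if l * s ^ 2 + c / (4 * l) < s * T
          then ENNReal.ofReal (s * rexp (-(s * T))) else 0 :=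
        setLIntegral_congr_fun measurableSet_Ioi fun l (hl : 0 < l) =>
          ofReal_exp_neg_eq_lintegral hs (by positivity)
    _ = ∫⁻ T in Ioi 0, ∫⁻ l in Ioi 0, if l * s ^ 2 + c / (4 * l) < s * T
          then ENNReal.ofReal (s * rexp (-(s * T))) else 0 :=
        lintegral_lintegral_swap (Measurable.ite (measurableSet_lt (by fun_prop) (by fun_prop))
          (by fun_prop) measurable_const).aemeasurable
    _ = ∫⁻ T in Ioi 0, ENNReal.ofReal (rexp (-(s * T)) * √(T ^ 2 - c)) :=
        setLIntegral_congr_fun measurableSet_Ioi fun T hT =>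
          lintegral_ite_mul_sq_add_div_lt hs hc hT

lemma lintegral_mul_exp_neg_mul_Ioi {r : ℝ} (hr : 0 < r) :
    ∫⁻ l in Ioi 0, ENNReal.ofReal (l * rexp (-(r * l))) = ENNReal.ofReal (1 / r ^ 2) := by
  have hval : ∫ l in Ioi 0, l * rexp (-(r * l)) = 1 / r ^ 2 := by
    have h := integral_rpow_mul_exp_neg_mul_Ioi (a := 2) (r := r) two_pos hr
    norm_num [Real.Gamma_two] at h
    simpa using h
  rw [← hval, ofReal_integral_eq_lintegral_ofReal
    (Integrable.of_integral_ne_zero (hval ▸ (by positivity)))]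
  exact ae_restrict_of_forall_mem measurableSet_Ioi fun l (hl : 0 < l) => by positivity

end Subordination

section HalfChordSum

open MeasureTheory Set

variable {s : ℝ}

lemma tsum_ofReal_exp_neg_sqNorm_div {l : ℝ} (hl : 0 < l) (s : ℝ) :
    ∑' v : ℤ × ℤ, ENNReal.ofReal (rexp (-(l * s ^ 2 + sqNorm v / (4 * l)))) =
      ∑' v : ℤ × ℤ, ENNReal.ofReal
        (4 * π * (l * rexp (-((s ^ 2 + 4 * π ^ 2 * sqNorm v) * l)))) := by
  have hleft (v : ℤ × ℤ) : rexp (-(l * s ^ 2 + sqNorm v / (4 * l))) =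
      rexp (-(l * s ^ 2)) * rexp (-π * (4 * π * l)⁻¹ * sqNorm v) := by
    rw [← Real.exp_add]
    congr 1
    field_simp
    ring
  have hright (v : ℤ × ℤ) : 4 * π * (l * rexp (-((s ^ 2 + 4 * π ^ 2 * sqNorm v) * l))) =
      rexp (-(l * s ^ 2)) * (4 * π * l * rexp (-π * (4 * π * l)⁻¹⁻¹ * sqNorm v)) := by
    rw [inv_inv, mul_left_comm (rexp _), ← Real.exp_add]
    ring_nf
  have hpos : 0 < 4 * π * l := by positivity
  simp_rw [hleft, hright, ENNReal.ofReal_mul (Real.exp_pos _).le, ENNReal.ofReal_mul hpos.le,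
    ENNReal.tsum_mul_left]
  rw [tsum_ofReal_exp_neg_pi_mul_sqNorm (inv_pos.2 hpos), inv_inv]

lemma ofReal_exp_neg_mul_halfChordSum (s T : ℝ) :
    ENNReal.ofReal (rexp (-(s * T)) * halfChordSum T) =
      ∑' v : ℤ × ℤ, ENNReal.ofReal (rexp (-(s * T)) * √(T ^ 2 - sqNorm v)) := by
  have hsum : Summable fun v : ℤ × ℤ => √(T ^ 2 - sqNorm v) :=
    summable_of_hasFiniteSupport ((finite_setOf_sqNorm_lt (T ^ 2)).subset fun v hv =>
      sub_pos.1 (Real.sqrt_ne_zero'.1 hv))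
  rw [halfChordSum, ← tsum_mul_left, ENNReal.ofReal_tsum_of_nonneg (fun v => by positivity)
    (hsum.mul_left _)]

/- Writing the summand as a superposition of Gaussians, Poisson summation for the theta function
turns the sum over lattice points into a sum over dual lattice points. -/
theorem lintegral_exp_neg_mul_halfChordSum (hs : 0 < s) :
    ∫⁻ T in Ioi 0, ENNReal.ofReal (rexp (-(s * T)) * halfChordSum T) =
      ∑' v : ℤ × ℤ, ENNReal.ofReal (4 * π / (s ^ 2 + 4 * π ^ 2 * sqNorm v) ^ 2) := by
  calc ∫⁻ T in Ioi 0, ENNReal.ofReal (rexp (-(s * T)) * halfChordSum T)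
      = ∑' v : ℤ × ℤ, ∫⁻ T in Ioi 0, ENNReal.ofReal (rexp (-(s * T)) * √(T ^ 2 - sqNorm v)) := by
        simp_rw [ofReal_exp_neg_mul_halfChordSum]
        exact lintegral_tsum fun v => by fun_prop
    _ = ∫⁻ l in Ioi 0, ∑' v : ℤ × ℤ,
          ENNReal.ofReal (rexp (-(l * s ^ 2 + sqNorm v / (4 * l)))) := by
        simp_rw [lintegral_exp_neg_mul_sqrt_sq_sub hs (sqNorm_nonneg _)]
        exact (lintegral_tsum fun v => by fun_prop).symm
    _ = ∫⁻ l in Ioi 0, ∑' v : ℤ × ℤ,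
          ENNReal.ofReal (4 * π * (l * rexp (-((s ^ 2 + 4 * π ^ 2 * sqNorm v) * l)))) :=
        setLIntegral_congr_fun measurableSet_Ioi fun l hl => tsum_ofReal_exp_neg_sqNorm_div hl s
    _ = ∑' v : ℤ × ℤ, ENNReal.ofReal (4 * π / (s ^ 2 + 4 * π ^ 2 * sqNorm v) ^ 2) := by
        rw [lintegral_tsum fun v => by fun_prop]
        refine tsum_congr fun v => ?_
        have hr : 0 < s ^ 2 + 4 * π ^ 2 * sqNorm v :=
          add_pos_of_pos_of_nonneg (pow_pos hs 2) (mul_nonneg (by positivity) (sqNorm_nonneg v))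
        have h4π : 0 ≤ 4 * π := by positivity
        simp_rw [ENNReal.ofReal_mul h4π]
        rw [lintegral_const_mul _ (by fun_prop), lintegral_mul_exp_neg_mul_Ioi hr,
          ← ENNReal.ofReal_mul h4π, mul_one_div]

end HalfChordSum

section LaplaceTransform

open MeasureTheory Set

/-- Convergence on the whole half-plane `0 < re s` of the Laplace transform of `f`. -/
def LaplaceIntegrable (f : ℝ → ℝ) : Prop :=
  ∀ σ : ℝ, 0 < σ → IntegrableOn (fun T => rexp (-(σ * T)) * f T) (Ioi 0)

/-- The Laplace transform of the restriction of `f` to `(0, ∞)`; it is `0` where the integral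
diverges. -/
noncomputable def laplace (f : ℝ → ℝ) (s : ℂ) : ℂ :=
  ∫ T in Ioi 0, Complex.exp (-(s * (T : ℝ))) * f T

variable {f : ℝ → ℝ}

lemma LaplaceIntegrable.integrableOn_cexp (hf : LaplaceIntegrable f) {s : ℂ} (hs : 0 < s.re) :
    IntegrableOn (fun T : ℝ => Complex.exp (-(s * T)) * f T) (Ioi 0) := by
  have hunit (T : ℝ) : ‖Complex.exp (-(s.im * T) * Complex.I)‖ ≤ 1 := by
    simp [Complex.norm_exp]
  refine ((hf _ hs).ofReal (𝕜 := ℂ)).bdd_mul (c := 1)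
    (Measurable.aestronglyMeasurable (by fun_prop)) (ae_of_all _ hunit) |>.congr
    (ae_of_all _ fun T => ?_)
  simp only [Complex.coe_algebraMap, Complex.ofReal_mul, Complex.ofReal_exp]
  rw [← mul_assoc, ← Complex.exp_add]
  congr 2
  conv_rhs => rw [← Complex.re_add_im s]
  push_cast
  ring

lemma laplace_ofReal (f : ℝ → ℝ) (s : ℝ) :
    laplace f s = ((∫ T in Ioi 0, rexp (-(s * T)) * f T : ℝ) : ℂ) := by
  rw [laplace, ← integral_complex_ofReal]
  push_cast
  rfl

lemma LaplaceIntegrable.add {g : ℝ → ℝ} (hf : LaplaceIntegrable f) (hg : LaplaceIntegrable g) :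
    LaplaceIntegrable fun T => f T + g T := fun σ hσ =>
  ((hf σ hσ).add (hg σ hσ)).congr_fun (fun _ _ => (mul_add _ _ _).symm) measurableSet_Ioi

lemma LaplaceIntegrable.const_mul (hf : LaplaceIntegrable f) (c : ℝ) :
    LaplaceIntegrable fun T => c * f T := fun σ hσ =>
  (Integrable.const_mul (hf σ hσ) c).congr (ae_of_all _ fun _ => mul_left_comm _ _ _)

lemma laplace_add {g : ℝ → ℝ} (hf : LaplaceIntegrable f) (hg : LaplaceIntegrable g)
    {s : ℂ} (hs : 0 < s.re) :
    laplace (fun T => f T + g T) s = laplace f s + laplace g s := by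
  simp_rw [laplace, Complex.ofReal_add, mul_add]
  exact integral_add (hf.integrableOn_cexp hs) (hg.integrableOn_cexp hs)

lemma laplace_const_mul (f : ℝ → ℝ) (c : ℝ) (s : ℂ) :
    laplace (fun T => c * f T) s = c * laplace f s := by
  simp_rw [laplace, Complex.ofReal_mul, mul_left_comm _ (c : ℂ)]
  exact integral_const_mul _ _

lemma integral_exp_neg_mul_mul_pow (n : ℕ) {s : ℝ} (hs : 0 < s) :
    ∫ T in Ioi 0, rexp (-(s * T)) * T ^ n = n.factorial / s ^ (n + 1) := by
  have h := Real.integral_rpow_mul_exp_neg_mul_Ioi (a := n + 1) (r := s) (by positivity) hs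
  rw [Real.Gamma_nat_eq_factorial, add_sub_cancel_right] at h
  simp_rw [Real.rpow_natCast] at h
  norm_cast at h
  simp_rw [mul_comm (rexp _), h]
  rw [one_div, inv_pow, div_eq_inv_mul]

lemma laplaceIntegrable_pow (n : ℕ) : LaplaceIntegrable fun T => T ^ n := fun σ hσ =>
  Integrable.of_integral_ne_zero (integral_exp_neg_mul_mul_pow n hσ ▸ by positivity)

lemma laplace_pow_ofReal (n : ℕ) {s : ℝ} (hs : 0 < s) :
    laplace (fun T => T ^ n) s = n.factorial / (s : ℂ) ^ (n + 1) := by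
  rw [laplace_ofReal, integral_exp_neg_mul_mul_pow n hs]
  push_cast
  rfl

lemma mul_exp_neg_mul_le {σ : ℝ} (hσ : 0 < σ) (T : ℝ) :
    T * rexp (-(σ * T)) ≤ 2 / σ * rexp (-(σ / 2 * T)) := by
  have hT : T ≤ 2 / σ * rexp (σ / 2 * T) := by
    have h := Real.add_one_le_exp (σ / 2 * T)
    rw [div_mul_eq_mul_div, le_div_iff₀ hσ]
    linarith
  calc T * rexp (-(σ * T)) ≤ 2 / σ * rexp (σ / 2 * T) * rexp (-(σ * T)) := by gcongr
    _ = 2 / σ * rexp (-(σ / 2 * T)) := by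
      rw [mul_assoc, ← Real.exp_add]
      ring_nf

lemma LaplaceIntegrable.differentiableOn_laplace (hf : LaplaceIntegrable f) :
    DifferentiableOn ℂ (laplace f) {s | 0 < s.re} := by
  intro s₀ (hs₀ : 0 < s₀.re)
  set σ := s₀.re / 2
  have hσ : 0 < σ := half_pos hs₀
  have hnhds : {s : ℂ | σ < s.re} ∈ nhds s₀ :=
    (isOpen_lt continuous_const Complex.continuous_re).mem_nhds (half_lt_self hs₀)
  have hderiv (T : ℝ) (s : ℂ) : HasDerivAt (fun s : ℂ => Complex.exp (-(s * T)) * f T)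
      (-T * (Complex.exp (-(s * T)) * f T)) s := by
    convert! (((hasDerivAt_id s).mul_const (T : ℂ)).neg.cexp.mul_const (f T : ℂ)) using 1
    simp only [id_eq, Pi.neg_apply]
    ring
  have hbound (T : ℝ) (hT : T ∈ Ioi 0) (s : ℂ) (hs : σ < s.re) :
      ‖-T * (Complex.exp (-(s * T)) * f T)‖ ≤ 2 / σ * ‖rexp (-(σ / 2 * T)) * f T‖ := by
    have hT : 0 < T := hT
    rw [norm_mul, norm_mul, norm_mul, norm_neg, Complex.norm_real, Complex.norm_real,
      Complex.norm_exp, ← mul_assoc, ← mul_assoc, norm_of_nonneg hT.le,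
      norm_of_nonneg (exp_pos _).le]
    refine mul_le_mul_of_nonneg_right (le_trans ?_ (mul_exp_neg_mul_le hσ T)) (norm_nonneg _)
    simp only [Complex.neg_re, Complex.re_mul_ofReal]
    gcongr
  refine (hasDerivAt_integral_of_dominated_loc_of_deriv_le
    (F := fun s T => Complex.exp (-(s * (T : ℝ))) * f T) hnhds ?_ (hf.integrableOn_cexp hs₀) ?_
    (ae_restrict_of_forall_mem measurableSet_Ioi hbound) ((hf _ (half_pos hσ)).norm.const_mul _)
    (ae_of_all _ fun T s _ => hderiv T s)).2.differentiableAt.differentiableWithinAt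
  · filter_upwards [hnhds] with s hs
    exact (hf.integrableOn_cexp (hσ.trans hs)).aestronglyMeasurable
  · exact (Measurable.aestronglyMeasurable (by fun_prop)).mul
      (hf.integrableOn_cexp hs₀).aestronglyMeasurable

lemma eqOn_re_pos_of_eq_ofReal {F G : ℂ → ℂ} (hF : DifferentiableOn ℂ F {s | 0 < s.re})
    (hG : DifferentiableOn ℂ G {s | 0 < s.re}) (h : ∀ s : ℝ, 0 < s → F s = G s) :
    EqOn F G {s | 0 < s.re} := by
  have hopen : IsOpen {s : ℂ | 0 < s.re} := isOpen_lt continuous_const Complex.continuous_re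
  have hone : ((1 : ℝ) : ℂ) ∈ {s : ℂ | 0 < s.re} := by simp
  refine AnalyticOnNhd.eqOn_of_preconnected_of_frequently_eq (hF.analyticOnNhd hopen)
    (hG.analyticOnNhd hopen) (convex_halfSpace_re_gt 0).isPreconnected hone ?_
  have htendsto : Filter.Tendsto Complex.ofReal (nhdsWithin 1 {1}ᶜ)
      (nhdsWithin ((1 : ℝ) : ℂ) {((1 : ℝ) : ℂ)}ᶜ) :=
    Complex.continuous_ofReal.continuousWithinAt.tendsto_nhdsWithin fun x hx => by simpa using hx
  refine htendsto.frequently (Filter.Eventually.frequently ?_)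
  filter_upwards [nhdsWithin_le_nhds (lt_mem_nhds one_pos)] with s hs
  exact h s hs

lemma sum_sum_cexp_neg_mul (X : Finset ℝ) (σ T : ℝ) :
    ∑ x ∈ X, ∑ y ∈ X, Complex.exp (-((σ + ((x - y : ℝ) : ℂ) * Complex.I) * T)) =
      ((rexp (-(σ * T)) * Complex.normSq (∑ x ∈ X, Complex.exp (-(x * T * Complex.I))) : ℝ) :
        ℂ) := by
  rw [Complex.ofReal_mul, Complex.normSq_eq_conj_mul_self, map_sum, Finset.sum_mul_sum,
    Finset.mul_sum, Finset.sum_comm]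
  refine Finset.sum_congr rfl fun x _ => ?_
  rw [Finset.mul_sum]
  refine Finset.sum_congr rfl fun y _ => ?_
  rw [← Complex.exp_conj, Complex.ofReal_exp, ← Complex.exp_add, ← Complex.exp_add]
  congr 1
  simp only [map_neg, map_mul, Complex.conj_ofReal, Complex.conj_I]
  push_cast
  ring

theorem LaplaceIntegrable.re_sum_sum_laplace_nonneg (hf : LaplaceIntegrable f)
    (hpos : ∀ T, 0 < T → 0 ≤ f T) {σ : ℝ} (hσ : 0 < σ) (X : Finset ℝ) :
    0 ≤ (∑ x ∈ X, ∑ y ∈ X, laplace f (σ + ((x - y : ℝ) : ℂ) * Complex.I)).re := by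
  have hint (x y : ℝ) : IntegrableOn (fun T : ℝ =>
      Complex.exp (-((σ + ((x - y : ℝ) : ℂ) * Complex.I) * T)) * f T) (Ioi 0) :=
    hf.integrableOn_cexp (by simpa using hσ)
  have hsum : ∑ x ∈ X, ∑ y ∈ X, laplace f (σ + ((x - y : ℝ) : ℂ) * Complex.I) =
      ((∫ T in Ioi 0, rexp (-(σ * T)) *
        Complex.normSq (∑ x ∈ X, Complex.exp (-(x * T * Complex.I))) * f T : ℝ) : ℂ) := by
    simp_rw [laplace]
    rw [← integral_complex_ofReal, Finset.sum_congr rfl fun x _ =>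
      (integral_finsetSum _ fun y _ => hint x y).symm,
      ← integral_finsetSum _ fun x _ => integrable_finsetSum _ fun y _ => hint x y]
    simp_rw [← Finset.sum_mul, sum_sum_cexp_neg_mul, Complex.ofReal_mul]
  rw [hsum, Complex.ofReal_re]
  exact setIntegral_nonneg measurableSet_Ioi fun T hT =>
    mul_nonneg (mul_nonneg (exp_pos _).le (Complex.normSq_nonneg _)) (hpos T hT)

end LaplaceTransform

section DualSeries

open MeasureTheory Set

/-- The frequency `2π|v|` that the dual lattice point `v` contributes to the spectrum of
`halfChordSum`. -/
noncomputable def freq (v : ℤ × ℤ) : ℝ := 2 * π * √(sqNorm v)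

lemma freq_sq (v : ℤ × ℤ) : freq v ^ 2 = 4 * π ^ 2 * sqNorm v := by
  rw [freq, mul_pow, Real.sq_sqrt (sqNorm_nonneg v)]
  ring

lemma freq_nonneg (v : ℤ × ℤ) : 0 ≤ freq v := by
  unfold freq
  positivity

lemma freq_pos {v : ℤ × ℤ} (hv : v ≠ 0) : 0 < freq v :=
  mul_pos two_pi_pos (Real.sqrt_pos.2 (sqNorm_pos hv))

lemma freq_zero : freq 0 = 0 := by simp [freq, sqNorm]

lemma norm_finTwoArrowEquiv_symm_sq_le (v : ℤ × ℤ) :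
    ‖(finTwoArrowEquiv ℤ).symm v‖ ^ 2 ≤ sqNorm v := by
  refine Real.le_sqrt (norm_nonneg _) (sqNorm_nonneg v) |>.1 ?_
  refine (pi_norm_le_iff_of_nonneg (Real.sqrt_nonneg _)).2 (Fin.forall_fin_two.2 ⟨?_, ?_⟩) <;>
  · rw [Int.norm_eq_abs]
    refine Real.abs_le_sqrt ?_
    simp [sqNorm, sq_nonneg]

lemma summable_inv_freq_pow_four : Summable fun v : ℤ × ℤ => (freq v ^ 4)⁻¹ := by
  have hlattice := (finTwoArrowEquiv ℤ).symm.summable_iff.2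
    (EisensteinSeries.summable_one_div_norm_rpow (k := 4) (by norm_num))
  refine (hlattice.mul_left ((2 * π) ^ 4)⁻¹).of_nonneg_of_le
    (fun v => inv_nonneg.2 (pow_nonneg (freq_nonneg v) 4)) fun v => ?_
  rcases eq_or_ne v 0 with rfl | hv
  · rw [freq_zero]
    norm_num
    positivity
  have hnorm : 0 < ‖(finTwoArrowEquiv ℤ).symm v‖ := by
    refine norm_pos_iff.2 fun h => hv ?_
    simpa [Prod.ext_iff] using congrArg (finTwoArrowEquiv ℤ) h
  have hfreq : (2 * π) ^ 4 * ‖(finTwoArrowEquiv ℤ).symm v‖ ^ 4 ≤ freq v ^ 4 := by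
    rw [← mul_pow]
    unfold freq
    gcongr
    exact Real.le_sqrt_of_sq_le (norm_finTwoArrowEquiv_symm_sq_le v)
  rw [Function.comp_apply, Real.rpow_neg hnorm.le, ← mul_inv]
  norm_cast
  gcongr

lemma sq_mul_re_le_norm_sq_add_sq {s : ℂ} (hs : 0 ≤ s.re) {a : ℝ} (ha : 0 ≤ a) :
    a ^ 2 * s.re ≤ 2 * ‖s‖ * ‖s ^ 2 + a ^ 2‖ := by
  have hre : s.re ≤ ‖s‖ := Complex.re_le_norm s
  rcases le_total a (2 * ‖s‖) with h | h
  · have hfac : s ^ 2 + a ^ 2 = (s + a * Complex.I) * (s - a * Complex.I) := by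
      linear_combination (a : ℂ) ^ 2 * Complex.I_sq
    have hprod : a * s.re ≤ ‖s ^ 2 + a ^ 2‖ := by
      have hre₁ : s.re ≤ ‖s + a * Complex.I‖ := by
        simpa using Complex.re_le_norm (s + a * Complex.I)
      have hre₂ : s.re ≤ ‖s - a * Complex.I‖ := by
        simpa using Complex.re_le_norm (s - a * Complex.I)
      rw [hfac, norm_mul]
      rcases le_total 0 s.im with him | him
      · have him₁ : a ≤ ‖s + a * Complex.I‖ := by
          refine le_trans ?_ (Complex.im_le_norm _)
          simpa using him
        gcongr
      · have him₂ : a ≤ ‖s - a * Complex.I‖ := by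
          refine le_trans ?_ ((neg_le_abs _).trans (Complex.abs_im_le_norm _))
          simpa using him
        rw [mul_comm a]
        gcongr
    calc a ^ 2 * s.re = a * (a * s.re) := by ring
      _ ≤ 2 * ‖s‖ * ‖s ^ 2 + a ^ 2‖ := by gcongr
  · have hsub : a ^ 2 - ‖s‖ ^ 2 ≤ ‖s ^ 2 + a ^ 2‖ := by
      have := norm_sub_le (s ^ 2 + (a : ℂ) ^ 2) (s ^ 2)
      rw [add_sub_cancel_left, norm_pow, norm_pow, Complex.norm_of_nonneg ha] at this
      linarith
    have hsq : 0 ≤ ‖s‖ * (a ^ 2 - (2 * ‖s‖) ^ 2) :=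
      mul_nonneg (norm_nonneg s) (sub_nonneg.2 (by gcongr))
    calc a ^ 2 * s.re ≤ a ^ 2 * ‖s‖ := by gcongr
      _ ≤ 2 * ‖s‖ * (a ^ 2 - ‖s‖ ^ 2) := by linarith [pow_nonneg (norm_nonneg s) 3]
      _ ≤ 2 * ‖s‖ * ‖s ^ 2 + a ^ 2‖ := by gcongr

lemma sq_add_freq_sq_ne_zero {s : ℂ} (hs : 0 < s.re) {v : ℤ × ℤ} (hv : v ≠ 0) :
    s ^ 2 + (freq v : ℂ) ^ 2 ≠ 0 := by
  intro h
  have hle := sq_mul_re_le_norm_sq_add_sq hs.le (freq_nonneg v)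
  rw [h, norm_zero, mul_zero] at hle
  exact hle.not_gt (mul_pos (pow_pos (freq_pos hv) 2) hs)

/-- The contribution of the dual lattice point `v ≠ 0` to the Laplace transform of
`halfChordSum`; the point `v = 0`, which yields the main term `2π/3 · T³`, is left out. -/
noncomputable def dualTerm (s : ℂ) (v : ℤ × ℤ) : ℂ :=
  if v = 0 then 0 else 4 * π / (s ^ 2 + (freq v : ℂ) ^ 2) ^ 2

lemma dualTerm_of_ne (s : ℂ) {v : ℤ × ℤ} (hv : v ≠ 0) :
    dualTerm s v = 4 * π / (s ^ 2 + (freq v : ℂ) ^ 2) ^ 2 := if_neg hv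

lemma norm_dualTerm_le {s : ℂ} (hs : 0 < s.re) (v : ℤ × ℤ) :
    ‖dualTerm s v‖ ≤ 4 * π * (2 * ‖s‖ / s.re) ^ 2 * (freq v ^ 4)⁻¹ := by
  rcases eq_or_ne v 0 with rfl | hv
  · simp [dualTerm, freq_zero]
  have hfreq := freq_pos hv
  have hden : 0 < ‖s ^ 2 + (freq v : ℂ) ^ 2‖ := norm_pos_iff.2 (sq_add_freq_sq_ne_zero hs hv)
  have hinv : ‖s ^ 2 + (freq v : ℂ) ^ 2‖⁻¹ ≤ 2 * ‖s‖ / s.re * (freq v ^ 2)⁻¹ := by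
    rw [inv_le_iff_one_le_mul₀ hden, ← div_eq_mul_inv, div_div, div_mul_eq_mul_div,
      one_le_div (by positivity), mul_comm s.re]
    exact sq_mul_re_le_norm_sq_add_sq hs.le hfreq.le
  calc ‖dualTerm s v‖ = 4 * π * ‖s ^ 2 + (freq v : ℂ) ^ 2‖⁻¹ ^ 2 := by
        simp [dualTerm_of_ne s hv, div_eq_mul_inv, abs_of_pos pi_pos]
    _ ≤ 4 * π * (2 * ‖s‖ / s.re * (freq v ^ 2)⁻¹) ^ 2 := by gcongr
    _ = 4 * π * (2 * ‖s‖ / s.re) ^ 2 * (freq v ^ 4)⁻¹ := by ring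

lemma differentiableAt_dualTerm {s : ℂ} (hs : 0 < s.re) (v : ℤ × ℤ) :
    DifferentiableAt ℂ (fun s => dualTerm s v) s := by
  rcases eq_or_ne v 0 with rfl | hv
  · simp [dualTerm]
  · simp_rw [dualTerm_of_ne _ hv]
    exact (differentiableAt_const _).fun_div (by fun_prop)
      (pow_ne_zero 2 (sq_add_freq_sq_ne_zero hs hv))

lemma differentiableOn_tsum_dualTerm :
    DifferentiableOn ℂ (fun s => ∑' v, dualTerm s v) {s | 0 < s.re} := by
  intro s₀ (hs₀ : 0 < s₀.re)
  set U : Set ℂ := {s | s₀.re / 2 < s.re} ∩ {s | ‖s‖ < ‖s₀‖ + 1}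
  have hU : IsOpen U := (isOpen_lt continuous_const Complex.continuous_re).inter
    (isOpen_lt continuous_norm continuous_const)
  have hs₀U : s₀ ∈ U := ⟨half_lt_self hs₀, lt_add_one ‖s₀‖⟩
  have hre {s : ℂ} (hs : s ∈ U) : 0 < s.re := (half_pos hs₀).trans hs.1
  have hU' : DifferentiableOn ℂ (fun s => ∑' v, dualTerm s v) U := by
    refine Complex.differentiableOn_tsum_of_summable_norm (summable_inv_freq_pow_four.mul_left
      (4 * π * (2 * (‖s₀‖ + 1) / (s₀.re / 2)) ^ 2))
      (fun v s hs => (differentiableAt_dualTerm (hre hs) v).differentiableWithinAt) hU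
      fun v s hs => (norm_dualTerm_le (hre hs) v).trans ?_
    have hnorm : ‖s‖ ≤ ‖s₀‖ + 1 := hs.2.le
    have hre_pos := hre hs
    have hre_le : s₀.re / 2 ≤ s.re := hs.1.le
    exact mul_le_mul_of_nonneg_right (by gcongr) (inv_nonneg.2 (pow_nonneg (freq_nonneg v) 4))
  exact (hU'.differentiableAt (hU.mem_nhds hs₀U)).differentiableWithinAt

end DualSeries

section ChordExcess

open MeasureTheory Set

variable {s : ℝ}

lemma measurable_halfChordSum : Measurable halfChordSum := by
  have htsum (T : ℝ) :
      halfChordSum T = (∑' v : ℤ × ℤ, ENNReal.ofReal √(T ^ 2 - sqNorm v)).toReal := by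
    have h := ofReal_exp_neg_mul_halfChordSum 0 T
    simp only [zero_mul, neg_zero, exp_zero, one_mul] at h
    rw [← h, ENNReal.toReal_ofReal (halfChordSum_nonneg T)]
  rw [funext htsum]
  exact (Measurable.tsum fun v => by fun_prop).ennreal_toReal

lemma dualTerm_ofReal (s : ℝ) (v : ℤ × ℤ) : dualTerm s v = (‖dualTerm s v‖ : ℂ) := by
  rcases eq_or_ne v 0 with rfl | hv
  · simp [dualTerm]
  · have hnonneg : 0 ≤ 4 * π / (s ^ 2 + freq v ^ 2) ^ 2 := by positivity
    have hreal : dualTerm s v = ((4 * π / (s ^ 2 + freq v ^ 2) ^ 2 : ℝ) : ℂ) := by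
      rw [dualTerm_of_ne _ hv]
      push_cast
      rfl
    rw [hreal, Complex.norm_of_nonneg hnonneg]

lemma lintegral_exp_neg_mul_halfChordSum_eq_add (hs : 0 < s) :
    ∫⁻ T in Ioi 0, ENNReal.ofReal (rexp (-(s * T)) * halfChordSum T) =
      ENNReal.ofReal (4 * π / s ^ 4 + ∑' v, ‖dualTerm s v‖) := by
  have hsummable : Summable fun v => ‖dualTerm s v‖ :=
    (summable_inv_freq_pow_four.mul_left _).of_nonneg_of_le (fun v => norm_nonneg _)
      (norm_dualTerm_le (by simpa using hs))
  rw [lintegral_exp_neg_mul_halfChordSum hs, ENNReal.tsum_eq_add_tsum_ite 0,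
    ENNReal.ofReal_add (by positivity) (tsum_nonneg fun v => norm_nonneg _),
    ENNReal.ofReal_tsum_of_nonneg (fun v => norm_nonneg _) hsummable]
  congr 1
  · simp [sqNorm, ← pow_mul]
  · refine tsum_congr fun v => ?_
    rcases eq_or_ne v 0 with rfl | hv
    · simp [dualTerm]
    · have hnonneg : 0 ≤ 4 * π / (s ^ 2 + freq v ^ 2) ^ 2 := by positivity
      rw [if_neg hv, ← freq_sq, dualTerm_of_ne _ hv, ← Complex.norm_of_nonneg hnonneg]
      push_cast
      rfl

lemma exp_neg_mul_halfChordSum_nonneg (s T : ℝ) : 0 ≤ rexp (-(s * T)) * halfChordSum T :=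
  mul_nonneg (exp_pos _).le (halfChordSum_nonneg T)

lemma measurable_exp_neg_mul_halfChordSum (s : ℝ) :
    Measurable fun T => rexp (-(s * T)) * halfChordSum T := by
  have := measurable_halfChordSum
  fun_prop

lemma laplaceIntegrable_halfChordSum : LaplaceIntegrable halfChordSum := fun s hs => by
  refine (lintegral_ofReal_ne_top_iff_integrable
    (measurable_exp_neg_mul_halfChordSum s).aestronglyMeasurable
    (ae_of_all _ (exp_neg_mul_halfChordSum_nonneg s))).1 ?_
  rw [lintegral_exp_neg_mul_halfChordSum_eq_add hs]
  exact ENNReal.ofReal_ne_top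

lemma laplace_halfChordSum_ofReal (hs : 0 < s) :
    laplace halfChordSum s = 4 * π / (s : ℂ) ^ 4 + ∑' v, dualTerm s v := by
  rw [laplace_ofReal, integral_eq_lintegral_of_nonneg_ae
    (ae_of_all _ (exp_neg_mul_halfChordSum_nonneg s))
    (measurable_exp_neg_mul_halfChordSum s).aestronglyMeasurable,
    lintegral_exp_neg_mul_halfChordSum_eq_add hs, ENNReal.toReal_ofReal
    (add_nonneg (by positivity) (tsum_nonneg fun v => norm_nonneg _)), Complex.ofReal_add,
    Complex.ofReal_tsum]
  simp_rw [← dualTerm_ofReal]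
  push_cast
  rfl

/-- The amount by which `halfChordSum T` exceeds `2π/3 · T³ - C T`, half the volume of the ball of
radius `T` lowered by a linear term. -/
noncomputable def chordExcess (C T : ℝ) : ℝ := halfChordSum T - 2 * π / 3 * T ^ 3 + C * T

lemma chordExcess_eq (C : ℝ) : chordExcess C = fun T =>
    halfChordSum T + (-(2 * π / 3)) * T ^ 3 + C * T ^ 1 := by
  ext T
  rw [chordExcess]
  ring

lemma laplaceIntegrable_chordExcess (C : ℝ) : LaplaceIntegrable (chordExcess C) := by
  rw [chordExcess_eq]
  exact (laplaceIntegrable_halfChordSum.add ((laplaceIntegrable_pow 3).const_mul _)).add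
    ((laplaceIntegrable_pow 1).const_mul C)

lemma laplace_chordExcess_ofReal (C : ℝ) (hs : 0 < s) :
    laplace (chordExcess C) s = ∑' v, dualTerm s v + C / (s : ℂ) ^ 2 := by
  have hre : 0 < (s : ℂ).re := by simpa using hs
  have hcube := (laplaceIntegrable_pow 3).const_mul (-(2 * π / 3))
  rw [chordExcess_eq, laplace_add (laplaceIntegrable_halfChordSum.add hcube)
    ((laplaceIntegrable_pow 1).const_mul C) hre, laplace_add laplaceIntegrable_halfChordSum hcube
    hre, laplace_const_mul, laplace_const_mul, laplace_pow_ofReal 3 hs, laplace_pow_ofReal 1 hs,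
    laplace_halfChordSum_ofReal hs]
  norm_num [Nat.factorial]
  ring

theorem laplace_chordExcess (C : ℝ) {s : ℂ} (hs : 0 < s.re) :
    laplace (chordExcess C) s = ∑' v, dualTerm s v + C / s ^ 2 := by
  refine eqOn_re_pos_of_eq_ofReal (G := fun s => ∑' v, dualTerm s v + C / s ^ 2)
    (laplaceIntegrable_chordExcess C).differentiableOn_laplace
    (differentiableOn_tsum_dualTerm.fun_add fun s (hs : 0 < s.re) => ?_)
    (fun s hs => laplace_chordExcess_ofReal C hs) hs
  have hne : s ≠ 0 := by
    rintro rfl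
    simp at hs
  fun_prop (disch := exact pow_ne_zero 2 hne)

end ChordExcess

section Folner

lemma exists_le_mul_of_le_pow {a : ℕ → ℕ} (hpos : ∀ n, 0 < a n) {d : ℕ}
    (hle : ∀ n, a n ≤ (n + 1) ^ d) {c : ℝ} (hc : 1 < c) : ∃ n, (a (n + 1) : ℝ) ≤ c * a n := by
  by_contra! hgrow
  have hpow (n : ℕ) : c ^ n ≤ a n := by
    induction n with
    | zero => simpa using Nat.succ_le_of_lt (hpos 0)
    | succ n ih =>
      rw [pow_succ']
      exact (mul_le_mul_of_nonneg_left ih (by linarith)).trans (hgrow n).le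
  have hlim := (Filter.tendsto_add_atTop_iff_nat 1).2
    (tendsto_pow_const_div_const_pow_of_one_lt d hc)
  obtain ⟨n, hn⟩ := (hlim.eventually (gt_mem_nhds (inv_pos.2 (one_pos.trans hc)))).exists
  have hcn : c ^ n ≤ ((n + 1 : ℕ) : ℝ) ^ d := (hpow n).trans (mod_cast hle n)
  rw [div_lt_iff₀ (by positivity), pow_succ', inv_mul_cancel_left₀ (by positivity)] at hn
  exact hn.not_ge hcn

variable {A : Type*} [DecidableEq A] [AddCommMonoid A] {F : Finset A}

/-- The set of sums `∑ f ∈ F, k f • f` with multiplicities `0 ≤ k f ≤ n`. -/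
def multiplesBox (F : Finset A) (n : ℕ) : Finset A :=
  (Fintype.piFinset fun _ : F => Finset.range (n + 1)).image
    fun k : F → ℕ => ∑ f : F, k f • (f : A)

lemma mem_multiplesBox {n : ℕ} {x : A} :
    x ∈ multiplesBox F n ↔ ∃ k : F → ℕ, (∀ f, k f ≤ n) ∧ ∑ f : F, k f • (f : A) = x := by
  simp only [multiplesBox, Finset.mem_image, Fintype.mem_piFinset, Finset.mem_range,
    Nat.lt_succ_iff]

lemma card_multiplesBox_le (F : Finset A) (n : ℕ) : (multiplesBox F n).card ≤ (n + 1) ^ F.card :=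
  Finset.card_image_le.trans (by simp)

lemma multiplesBox_nonempty (F : Finset A) (n : ℕ) : (multiplesBox F n).Nonempty :=
  ⟨0, mem_multiplesBox.2 ⟨0, fun _ => n.zero_le, by simp⟩⟩

lemma multiplesBox_subset_succ (F : Finset A) (n : ℕ) :
    multiplesBox F n ⊆ multiplesBox F (n + 1) := by
  intro x hx
  obtain ⟨k, hk, rfl⟩ := mem_multiplesBox.1 hx
  exact mem_multiplesBox.2 ⟨k, fun f => (hk f).trans n.le_succ, rfl⟩

lemma add_mem_multiplesBox_succ {n : ℕ} {x f : A} (hx : x ∈ multiplesBox F n) (hf : f ∈ F) :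
    x + f ∈ multiplesBox F (n + 1) := by
  obtain ⟨k, hk, rfl⟩ := mem_multiplesBox.1 hx
  refine mem_multiplesBox.2 ⟨k + Pi.single ⟨f, hf⟩ 1, fun g => add_le_add (hk g) ?_, ?_⟩
  · rw [Pi.single_apply]
    split_ifs <;> simp
  · simp [add_smul, Finset.sum_add_distrib, Pi.single_apply]

theorem exists_card_le_mul_card_filter_add_mem (F : Finset A) {c : ℝ} (hc : 1 < c) :
    ∃ X : Finset A, X.Nonempty ∧ ∀ f ∈ F, (X.card : ℝ) ≤ c * (X.filter (· + f ∈ X)).card := by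
  obtain ⟨n, hn⟩ := exists_le_mul_of_le_pow (fun n => (multiplesBox_nonempty F n).card_pos)
    (card_multiplesBox_le F) hc
  refine ⟨multiplesBox F (n + 1), multiplesBox_nonempty F _, fun f hf => hn.trans ?_⟩
  gcongr
  intro x hx
  exact Finset.mem_filter.2 ⟨multiplesBox_subset_succ F n hx, add_mem_multiplesBox_succ hx hf⟩

end Folner

section PositiveDefinite

variable {A : Type*} [AddCommGroup A] {φ : A → ℝ} {F : Finset A}

lemma sum_ite_neg_le [DecidableEq A] (hneg : ∀ a ≠ 0, φ a ≤ 0) (hF : 0 ∉ F) (X : Finset A) {y : A}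
    (hy : y ∈ X) :
    ∑ f ∈ F, (if y + f ∈ X then -φ f else 0) ≤ φ 0 - ∑ x ∈ X, φ (x - y) := by
  have hsub : (F.filter (y + · ∈ X)).image (y + ·) ⊆ X.erase y := by
    intro x hx
    obtain ⟨f, hf, rfl⟩ := Finset.mem_image.1 hx
    rw [Finset.mem_filter] at hf
    have hf0 : f ≠ 0 := fun h => hF (h ▸ hf.1)
    simpa [hf0] using hf.2
  calc ∑ f ∈ F, (if y + f ∈ X then -φ f else 0)
      = ∑ x ∈ (F.filter (y + · ∈ X)).image (y + ·), -φ (x - y) := by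
        rw [Finset.sum_image fun _ _ _ _ h => add_left_cancel h, Finset.sum_filter]
        simp
    _ ≤ ∑ x ∈ X.erase y, -φ (x - y) :=
        Finset.sum_le_sum_of_subset_of_nonneg hsub fun x hx _ =>
          neg_nonneg.2 (hneg _ (sub_ne_zero.2 (Finset.ne_of_mem_erase hx)))
    _ = φ 0 - ∑ x ∈ X, φ (x - y) := by
        rw [← Finset.add_sum_erase X _ hy, sub_self, Finset.sum_neg_distrib]
        ring

/- On a Følner set `X`, almost all `y ∈ X` satisfy `y + f ∈ X` for every `f ∈ F`; for these `y` the
inner sum `∑ x ∈ X, φ (x - y)` is at most `φ 0 + ∑ f ∈ F, φ f`. -/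
theorem sum_neg_le_of_sum_sum_nonneg (hpos : ∀ X : Finset A, 0 ≤ ∑ x ∈ X, ∑ y ∈ X, φ (x - y))
    (hneg : ∀ a ≠ 0, φ a ≤ 0) (hF : 0 ∉ F) : ∑ f ∈ F, -φ f ≤ φ 0 := by
  classical
  refine (le_mul_of_forall_lt₀ fun c hc b hb => ?_).trans_eq (one_mul (φ 0))
  obtain ⟨X, hX, hcard⟩ := exists_card_le_mul_card_filter_add_mem F hc
  refine le_of_mul_le_mul_left ?_ (show (0 : ℝ) < X.card by exact_mod_cast hX.card_pos)
  have hc0 : 0 ≤ c := by linarith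
  calc (X.card : ℝ) * ∑ f ∈ F, -φ f
      ≤ ∑ f ∈ F, c * (X.filter (· + f ∈ X)).card * -φ f := by
        rw [Finset.mul_sum]
        refine Finset.sum_le_sum fun f hf => mul_le_mul_of_nonneg_right (hcard f hf) ?_
        exact neg_nonneg.2 (hneg f fun h => hF (h ▸ hf))
    _ = c * ∑ y ∈ X, ∑ f ∈ F, (if y + f ∈ X then -φ f else 0) := by
        rw [Finset.sum_comm, Finset.mul_sum]
        refine Finset.sum_congr rfl fun f _ => ?_
        rw [← Finset.sum_filter, Finset.sum_const, nsmul_eq_mul, mul_assoc]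
    _ ≤ c * ∑ y ∈ X, (φ 0 - ∑ x ∈ X, φ (x - y)) := by
        exact mul_le_mul_of_nonneg_left
          (Finset.sum_le_sum fun y hy => sum_ite_neg_le hneg hF X hy) hc0
    _ ≤ c * (X.card * φ 0) := by
        rw [Finset.sum_sub_distrib, Finset.sum_const, nsmul_eq_mul, Finset.sum_comm]
        gcongr
        exact sub_le_self _ (hpos X)
    _ ≤ X.card * (c * b) := by
        rw [mul_left_comm]
        gcongr

end PositiveDefinite

section BoundaryLimit

open Filter Topology

/-- The size `-lim σ² · dualTerm (σ + ω i) v`, as `σ → 0⁺`, of the double pole that the dual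
lattice point `v` contributes at `ω i`. For `v = 0` it vanishes, since `π / 0 ^ 2 = 0`. -/
noncomputable def poleWeight (ω : ℝ) (v : ℤ × ℤ) : ℝ := if freq v = |ω| then π / ω ^ 2 else 0

lemma poleWeight_nonneg (ω : ℝ) (v : ℤ × ℤ) : 0 ≤ poleWeight ω v := by
  unfold poleWeight
  split_ifs <;> positivity

lemma poleWeight_freq (v : ℤ × ℤ) : poleWeight (freq v) v = π / freq v ^ 2 :=
  if_pos (abs_of_nonneg (freq_nonneg v)).symm

lemma tendsto_div_sq_add_sq (ω : ℝ) {a : ℝ} (ha : 0 < a) :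
    Tendsto (fun σ : ℝ => (σ : ℂ) / ((σ + ω * Complex.I) ^ 2 + a ^ 2)) (𝓝[>] 0)
      (𝓝 (if a = |ω| then (2 * ω * Complex.I)⁻¹ else 0)) := by
  split_ifs with h
  · have hω : ω ≠ 0 := abs_pos.1 (h ▸ ha)
    have hcont : ContinuousAt (fun σ : ℝ => ((σ : ℂ) + 2 * ω * Complex.I)⁻¹) 0 :=
      ContinuousAt.inv₀ (by fun_prop) (by simp [hω])
    have hlim := hcont.tendsto.mono_left (nhdsWithin_le_nhds (s := Set.Ioi 0))
    rw [Complex.ofReal_zero, zero_add] at hlim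
    refine hlim.congr' ?_
    filter_upwards [self_mem_nhdsWithin] with σ (hσ : 0 < σ)
    have hσ' : (σ : ℂ) ≠ 0 := Complex.ofReal_ne_zero.2 hσ.ne'
    have ha2 : (a : ℂ) ^ 2 = ω ^ 2 := by rw [h]; exact_mod_cast sq_abs ω
    have hfac : ((σ : ℂ) + ω * Complex.I) ^ 2 + a ^ 2 = σ * (σ + 2 * ω * Complex.I) := by
      linear_combination ha2 + (ω : ℂ) ^ 2 * Complex.I_sq
    rw [hfac, div_mul_cancel_left₀ hσ']
  · have hne : (((0 : ℝ) : ℂ) + ω * Complex.I) ^ 2 + (a : ℂ) ^ 2 ≠ 0 := by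
      intro h0
      have hsq : (a : ℂ) ^ 2 = ω ^ 2 := by
        rw [Complex.ofReal_zero] at h0
        linear_combination h0 - (ω : ℂ) ^ 2 * Complex.I_sq
      exact h ((abs_of_pos ha).symm.trans (sq_eq_sq_iff_abs_eq_abs a ω |>.1 (mod_cast hsq)))
    have hcont : ContinuousAt
        (fun σ : ℝ => (σ : ℂ) / ((σ + ω * Complex.I) ^ 2 + a ^ 2)) 0 :=
      ContinuousAt.div (by fun_prop) (by fun_prop) hne
    simpa using hcont.tendsto.mono_left (nhdsWithin_le_nhds (s := Set.Ioi 0))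

lemma tendsto_sq_mul_dualTerm (ω : ℝ) (v : ℤ × ℤ) :
    Tendsto (fun σ : ℝ => (σ : ℂ) ^ 2 * dualTerm (σ + ω * Complex.I) v) (𝓝[>] 0)
      (𝓝 (-(poleWeight ω v : ℂ))) := by
  rcases eq_or_ne v 0 with rfl | hv
  · have hweight : poleWeight ω 0 = 0 := by
      simp +contextual [poleWeight, freq_zero, eq_comm (a := (0 : ℝ))]
    simp [dualTerm, hweight]
  convert ((tendsto_div_sq_add_sq ω (freq_pos hv)).pow 2).const_mul (4 * π : ℂ) using 2
  · rw [dualTerm_of_ne _ hv, div_pow, mul_div_left_comm]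
  · unfold poleWeight
    split_ifs
    · push_cast
      rw [inv_pow, mul_pow, Complex.I_sq]
      ring
    · simp

lemma norm_sq_mul_dualTerm_le (ω : ℝ) {σ : ℝ} (hσ : σ ∈ Set.Ioc 0 1) (v : ℤ × ℤ) :
    ‖(σ : ℂ) ^ 2 * dualTerm (σ + ω * Complex.I) v‖
      ≤ 4 * π * (2 * (1 + |ω|)) ^ 2 * (freq v ^ 4)⁻¹ := by
  set s : ℂ := σ + ω * Complex.I
  have hre : s.re = σ := by simp [s]
  have hnorm : ‖s‖ ≤ 1 + |ω| := by
    refine (norm_add_le _ _).trans (add_le_add ?_ (by simp))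
    simpa [abs_of_pos hσ.1] using hσ.2
  have hterm := norm_dualTerm_le (s := s) (hre ▸ hσ.1) v
  rw [hre] at hterm
  have hσ0 := hσ.1
  have hfreq := inv_nonneg.2 (pow_nonneg (freq_nonneg v) 4)
  calc ‖(σ : ℂ) ^ 2 * dualTerm s v‖ = σ ^ 2 * ‖dualTerm s v‖ := by simp
    _ ≤ σ ^ 2 * (4 * π * (2 * ‖s‖ / σ) ^ 2 * (freq v ^ 4)⁻¹) := by gcongr
    _ = 4 * π * (2 * ‖s‖) ^ 2 * (freq v ^ 4)⁻¹ := by field_simp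
    _ ≤ 4 * π * (2 * (1 + |ω|)) ^ 2 * (freq v ^ 4)⁻¹ :=
        mul_le_mul_of_nonneg_right (by gcongr) hfreq

lemma tendsto_sq_mul_tsum_dualTerm (ω : ℝ) :
    Tendsto (fun σ : ℝ => (σ : ℂ) ^ 2 * ∑' v, dualTerm (σ + ω * Complex.I) v) (𝓝[>] 0)
      (𝓝 (-(∑' v, poleWeight ω v : ℝ))) := by
  simp_rw [Complex.ofReal_tsum, ← tsum_neg, ← tsum_mul_left]
  refine tendsto_tsum_of_dominated_convergence
    (summable_inv_freq_pow_four.mul_left (4 * π * (2 * (1 + |ω|)) ^ 2))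
    (tendsto_sq_mul_dualTerm ω) ?_
  filter_upwards [Ioc_mem_nhdsGT one_pos] with σ hσ using norm_sq_mul_dualTerm_le ω hσ

lemma summable_poleWeight (ω : ℝ) : Summable (poleWeight ω) := by
  refine .of_norm_bounded (summable_inv_freq_pow_four.mul_left (4 * π * (2 * (1 + |ω|)) ^ 2))
    fun v => ?_
  rw [← Complex.norm_real, ← norm_neg]
  refine le_of_tendsto (tendsto_sq_mul_dualTerm ω v).norm ?_
  filter_upwards [Ioc_mem_nhdsGT one_pos] with σ hσ using norm_sq_mul_dualTerm_le ω hσ v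

lemma tendsto_sq_mul_div_sq (C ω : ℝ) :
    Tendsto (fun σ : ℝ => (σ : ℂ) ^ 2 * (C / (σ + ω * Complex.I) ^ 2)) (𝓝[>] 0)
      (𝓝 (if ω = 0 then C else 0 : ℝ)) := by
  split_ifs with hω
  · refine tendsto_const_nhds.congr' ?_
    filter_upwards [self_mem_nhdsWithin] with σ (hσ : 0 < σ)
    have hσ' : (σ : ℂ) ≠ 0 := Complex.ofReal_ne_zero.2 hσ.ne'
    rw [hω, Complex.ofReal_zero, zero_mul, add_zero, mul_div_cancel₀ _ (pow_ne_zero 2 hσ')]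
  · have hcont : ContinuousAt
        (fun σ : ℝ => (σ : ℂ) ^ 2 * ((C : ℂ) / (σ + ω * Complex.I) ^ 2)) 0 :=
      ContinuousAt.mul (by fun_prop)
        (ContinuousAt.div (by fun_prop) (by fun_prop) (pow_ne_zero 2 (by simp [hω])))
    simpa using hcont.tendsto.mono_left (nhdsWithin_le_nhds (s := Set.Ioi 0))

/-- The limit of `σ² · laplace (chordExcess C) (σ + ω i)` as `σ → 0⁺`. -/
noncomputable def polePart (C ω : ℝ) : ℝ := (if ω = 0 then C else 0) - ∑' v, poleWeight ω v

lemma tendsto_sq_mul_laplace_chordExcess (C ω : ℝ) :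
    Tendsto (fun σ : ℝ => (σ : ℂ) ^ 2 * laplace (chordExcess C) (σ + ω * Complex.I)) (𝓝[>] 0)
      (𝓝 (polePart C ω)) := by
  have hlim := (tendsto_sq_mul_div_sq C ω).add (tendsto_sq_mul_tsum_dualTerm ω)
  rw [← sub_eq_add_neg, ← Complex.ofReal_sub] at hlim
  refine hlim.congr' ?_
  filter_upwards [self_mem_nhdsWithin] with σ (hσ : 0 < σ)
  rw [laplace_chordExcess C (by simpa using hσ)]
  ring

lemma polePart_zero (C : ℝ) : polePart C 0 = C := by simp [polePart, poleWeight]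

lemma polePart_nonpos (C : ℝ) {ω : ℝ} (hω : ω ≠ 0) : polePart C ω ≤ 0 := by
  rw [polePart, if_neg hω, zero_sub, neg_nonpos]
  exact tsum_nonneg (poleWeight_nonneg ω)

lemma sum_sum_polePart_nonneg {C : ℝ} (hpos : ∀ T, 0 < T → 0 ≤ chordExcess C T) (X : Finset ℝ) :
    0 ≤ ∑ x ∈ X, ∑ y ∈ X, polePart C (x - y) := by
  have hlim := (Complex.continuous_re.tendsto _).comp <| tendsto_finsetSum X fun x _ =>
    tendsto_finsetSum X fun y _ => tendsto_sq_mul_laplace_chordExcess C (x - y)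
  simp_rw [← Complex.ofReal_sum, Complex.ofReal_re] at hlim
  refine ge_of_tendsto hlim ?_
  filter_upwards [self_mem_nhdsWithin] with σ (hσ : 0 < σ)
  simp_rw [Function.comp_apply, ← Finset.mul_sum]
  rw [← Complex.ofReal_pow, Complex.re_ofReal_mul]
  exact mul_nonneg (sq_nonneg σ)
    ((laplaceIntegrable_chordExcess C).re_sum_sum_laplace_nonneg hpos hσ X)

lemma sum_pi_div_freq_sq_le {C : ℝ} (hpos : ∀ T, 0 < T → 0 ≤ chordExcess C T)
    {V : Finset (ℤ × ℤ)} (hV : 0 ∉ V) : ∑ v ∈ V, π / freq v ^ 2 ≤ C := by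
  have hfreq_ne : ∀ ω ∈ V.image freq, ω ≠ 0 := by
    rintro _ hω rfl
    obtain ⟨v, hv, h⟩ := Finset.mem_image.1 hω
    exact (freq_pos fun h0 => hV (h0 ▸ hv)).ne' h
  calc ∑ v ∈ V, π / freq v ^ 2
      = ∑ ω ∈ V.image freq, ∑ v ∈ V with freq v = ω, poleWeight ω v := by
        rw [← Finset.sum_fiberwise_of_maps_to fun v => Finset.mem_image_of_mem freq]
        refine Finset.sum_congr rfl fun ω _ => Finset.sum_congr rfl fun v hv => ?_
        rw [← (Finset.mem_filter.1 hv).2, poleWeight_freq]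
    _ ≤ ∑ ω ∈ V.image freq, -polePart C ω := by
        refine Finset.sum_le_sum fun ω hω => ?_
        rw [polePart, if_neg (hfreq_ne ω hω), zero_sub, neg_neg]
        exact (summable_poleWeight ω).sum_le_tsum _ fun v _ => poleWeight_nonneg ω v
    _ ≤ polePart C 0 := sum_neg_le_of_sum_sum_nonneg (sum_sum_polePart_nonneg hpos)
        (fun ω hω => polePart_nonpos C hω) fun h => hfreq_ne 0 h rfl
    _ = C := polePart_zero C

theorem exists_chordExcess_neg (C : ℝ) : ∃ T, 0 < T ∧ chordExcess C T < 0 := by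
  by_contra! hpos
  have hsummable : Summable fun v => π / freq v ^ 2 := by
    refine summable_of_sum_le (c := C) (fun v => by positivity) fun V => ?_
    rw [← Finset.sum_erase V (a := 0) (by simp [freq_zero])]
    exact sum_pi_div_freq_sq_le hpos (Finset.notMem_erase 0 V)
  refine not_summable_inv_sqNorm ((hsummable.mul_left (4 * π)).congr fun v => ?_)
  rw [freq_sq]
  field_simp

end BoundaryLimit

theorem exists_gt_halfChordSum_sub_lt (C T₀ : ℝ) :
    ∃ T, T₀ < T ∧ halfChordSum T - 2 * π / 3 * T ^ 3 < -C * T := by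
  obtain ⟨T, hT, hneg⟩ := exists_chordExcess_neg (max C (2 * π / 3 * T₀ ^ 2))
  rw [chordExcess] at hneg
  refine ⟨T, ?_, ?_⟩
  · by_contra! hle
    have hcube : 2 * π / 3 * T ^ 3 ≤ 2 * π / 3 * T₀ ^ 2 * T := by
      rw [pow_succ, ← mul_assoc]
      gcongr
    have hmax := mul_le_mul_of_nonneg_right (le_max_right C (2 * π / 3 * T₀ ^ 2)) hT.le
    linarith [halfChordSum_nonneg T]
  · linarith [mul_le_mul_of_nonneg_right (le_max_left C (2 * π / 3 * T₀ ^ 2)) hT.le]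

/-- liminf_{x→∞} E(x)/x^{1/2} = −∞: for every real `C` there exist arbitrarily
large `x` with `E(x) < −C·x^{1/2}`. -/
theorem liminf_E_eq_bot :
    ∀ C : ℝ, ∀ X : ℝ, ∃ x : ℝ, X < x ∧ E x < -C * x ^ ((1 : ℝ) / 2) := by
  intro C X
  set K := π * sqrtGap 0 + 9
  obtain ⟨T, hT, hneg⟩ :=
    exists_gt_halfChordSum_sub_lt ((C + K) / (2 * √2)) (max 1 X)
  have hT₁ : 1 < T := (le_max_left 1 X).trans_lt hT
  have hX : X < T := (le_max_right 1 X).trans_lt hT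
  refine ⟨T ^ 4, hX.trans_le (le_self_pow₀ hT₁.le four_ne_zero), ?_⟩
  have hroot : (T ^ 4) ^ ((1 : ℝ) / 2) = T ^ 2 := by
    rw [← Real.sqrt_eq_rpow, pow_mul T 2 2, Real.sqrt_sq (by positivity)]
  calc E (T ^ 4) ≤ 2 * √2 * T * (halfChordSum T - 2 * π / 3 * T ^ 3) + K * T ^ 2 :=
        E_pow_four_le hT₁.le
    _ < 2 * √2 * T * (-((C + K) / (2 * √2)) * T) + K * T ^ 2 := by gcongr
    _ = -C * (T ^ 4) ^ ((1 : ℝ) / 2) := by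
        rw [hroot]
        field_simp
        ring
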